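/- arXiv:1812.08480 — 2 statements merged into one kernel-verified Lean document; each statement's English description precedes it below -/
import Mathlib

section
/- There is a constant C > 0 such that for every n ≥ 4 there exists a finitely supported probability distribution D over deterministic strategies for the HiddenPermutation problem with n positions such that for every secret (z,π) ∈ {0,1}^n × S_n, the expectation over g ∼ D of T(g,z,π) is at most C·n·log₂ log₂ n. -/
/-- The score `f_{z,π}(x)`: the length of the longest common prefix of `x` and `z`
in the order imposed by `π` (positions are 0-indexed, so `π j` for `(j : ℕ) < i`
corresponds to the 1-indexed positions `π(1),…,π(i)`). -/
def score (n : ℕ) (z : Fin n → Bool) (π : Equiv.Perm (Fin n)) (x : Fin n → Bool) : ℕ :=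
  Nat.findGreatest (fun i => ∀ j : Fin n, (j : ℕ) < i → z (π j) = x (π j)) n

/-- The list of scores produced in the first `k` queries when the deterministic
strategy `g` plays against the secret `(z, π)`. -/
def histScores (n : ℕ) (g : List ℕ → Fin n → Bool) (z : Fin n → Bool)
    (π : Equiv.Perm (Fin n)) : ℕ → List ℕ
  | 0 => []
  | k + 1 => histScores n g z π k ++ [score n z π (g (histScores n g z π k))]

/-- `(z, π)` is the unique secret consistent with the guessing history produced by the
deterministic strategy `g` against `(z, π)` in its first `T` queries. -/
def Identifies (n : ℕ) (g : List ℕ → Fin n → Bool) (z : Fin n → Bool)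
    (π : Equiv.Perm (Fin n)) (T : ℕ) : Prop :=
  ∀ (z' : Fin n → Bool) (π' : Equiv.Perm (Fin n)),
    (∀ k < T, score n z' π' (g (histScores n g z π k)) =
        score n z π (g (histScores n g z π k))) →
    z' = z ∧ π' = π


open scoped ENNReal

/-- `T(g,z,π)`: the least `T` such that `g` identifies `(z,π)` within `T` queries,
and `∞` if no such `T` exists. -/
noncomputable def timeToIdentify (n : ℕ) (g : List ℕ → Fin n → Bool) (z : Fin n → Bool)
    (π : Equiv.Perm (Fin n)) : ℕ∞ :=
  sInf {T : ℕ∞ | ∃ m : ℕ, T = (m : ℕ∞) ∧ Identifies n g z π m}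

/-!
Relabelling the positions at random makes `π` uniformly random. An algorithm learns the bits of `z`
in the order of `π`. Of the position of each step treated so far it knows only that it lies in a
candidate set; these sets are disjoint. Flipping all positions that are candidates of no earlier
step reveals whether the next step sits at one of them, and if so its bit. Otherwise there is a
collision.

Candidate sets shrink on `O(log log n)` levels, with the logarithm of their size dropping
geometrically below that of level `0`. To narrow the sets of `m` steps at once, cut each of them
into `b` blocks and flip the current block of every step: the score either reveals the block of one
step or excludes the current block for all of them, so `m + b` queries suffice. Steps therefore wait
at a level until `b` of them can leave it together, at amortized cost `O(1)` per step and level.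

A collision is resolved by isolating the positions of all steps waiting at the lower levels. Since
fewer than `b` steps wait at each level, the sets of all waiting steps together contain only a
`1 / polylog n` fraction of the positions. The position of step `i` is uniform among the `n - i`
positions not used by the first `i` steps, so collisions cost `O(n)` queries in expectation.
-/

namespace HiddenPermutation

open Finset
open scoped BigOperators

/-! ### Query trees -/

/-- Adaptive query algorithms: a tree either returns a result or asks a query `q : Q` and branches
on the answer in `R`. -/
inductive QueryTree (Q R α : Type*)
  | leaf : α → QueryTree Q R α
  | node : Q → (R → QueryTree Q R α) → QueryTree Q R α

namespace QueryTree

universe u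

variable {Q Q' R R' : Type*} {α β : Type u}

/-- Sequential composition: run `p`, then the tree that `f` assigns to its result. -/
protected def bind : QueryTree Q R α → (α → QueryTree Q R β) → QueryTree Q R β
  | leaf a, f => f a
  | node q k, f => node q fun r => (k r).bind f

instance : Monad (QueryTree Q R) where
  pure := leaf
  bind := QueryTree.bind

/-- The result of running a tree against the oracle `O`. -/
def eval (O : Q → R) : QueryTree Q R α → α
  | leaf a => a
  | node q k => (k (O q)).eval O

/-- The number of queries asked when running a tree against the oracle `O`. -/
def cost (O : Q → R) : QueryTree Q R α → ℕ
  | leaf _ => 0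
  | node q k => (k (O q)).cost O + 1

/-- Adapts a tree to other query and answer types: each query passes through `f` before it is
asked, and each answer passes through `g` before it is used. -/
def translate (f : Q → Q') (g : R' → R) : QueryTree Q R α → QueryTree Q' R' α
  | leaf a => leaf a
  | node q k => node (f q) fun r => (k (g r)).translate f g

/-- The bounded loop `a ← f 0 a; …; a ← f (k - 1) a`. -/
def loop (f : ℕ → α → QueryTree Q R α) : ℕ → α → QueryTree Q R α
  | 0, a => pure a
  | k + 1, a => loop f k a >>= f k

/-- The deterministic strategy that plays a tree, as a function of the answers so far; once the
tree has returned, it asks the default query. -/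
def strategy [Inhabited Q] : QueryTree Q R α → List R → Q
  | leaf _, _ => default
  | node q _, [] => q
  | node _ k, r :: h => (k r).strategy h

section Semantics

variable (O : Q → R)

@[simp]
theorem eval_pure (a : α) : (pure a : QueryTree Q R α).eval O = a := rfl

@[simp]
theorem cost_pure (a : α) : (pure a : QueryTree Q R α).cost O = 0 := rfl

@[simp]
theorem eval_node (q : Q) (k : R → QueryTree Q R α) : (node q k).eval O = (k (O q)).eval O := rfl

@[simp]
theorem cost_node (q : Q) (k : R → QueryTree Q R α) :
    (node q k).cost O = (k (O q)).cost O + 1 := rfl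

@[simp]
theorem eval_bind (p : QueryTree Q R α) (f : α → QueryTree Q R β) :
    (p >>= f).eval O = (f (p.eval O)).eval O := by
  induction p with
  | leaf a => rfl
  | node q _ ih => exact ih (O q)

@[simp]
theorem cost_bind (p : QueryTree Q R α) (f : α → QueryTree Q R β) :
    (p >>= f).cost O = p.cost O + (f (p.eval O)).cost O := by
  induction p with
  | leaf a => exact (Nat.zero_add _).symm
  | node q k ih =>
    change ((k (O q) >>= f).cost O) + 1 = _
    rw [ih, cost_node, eval_node, Nat.add_right_comm]

@[simp]
theorem eval_translate (O : Q' → R') (f : Q → Q') (g : R' → R) (p : QueryTree Q R α) :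
    (p.translate f g).eval O = p.eval fun q => g (O (f q)) := by
  induction p with
  | leaf a => rfl
  | node _ _ ih => exact ih _

@[simp]
theorem cost_translate (O : Q' → R') (f : Q → Q') (g : R' → R) (p : QueryTree Q R α) :
    (p.translate f g).cost O = p.cost fun q => g (O (f q)) := by
  induction p with
  | leaf a => rfl
  | node _ _ ih => exact congrArg (· + 1) (ih _)

@[simp]
theorem loop_zero (f : ℕ → α → QueryTree Q R α) (a : α) : loop f 0 a = pure a := rfl

@[simp]
theorem loop_succ (f : ℕ → α → QueryTree Q R α) (k : ℕ) (a : α) :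
    loop f (k + 1) a = loop f k a >>= f k := rfl

variable {O}

theorem eval_loop_induction {f : ℕ → α → QueryTree Q R α} {a : α} (P : ℕ → α → Prop) {m : ℕ}
    (zero : P 0 a) (succ : ∀ k < m, ∀ b, P k b → P (k + 1) ((f k b).eval O)) :
    ∀ k ≤ m, P k ((loop f k a).eval O)
  | 0, _ => zero
  | k + 1, hk => by
    rw [loop_succ, eval_bind]
    exact succ k hk _ (eval_loop_induction P zero succ k (Nat.le_of_succ_le hk))

theorem cost_loop_add_potential_le {f : ℕ → α → QueryTree Q R α} {a : α} (φ : ℕ → α → ℕ)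
    {c : ℕ → ℕ} {m : ℕ}
    (h : ∀ k < m, (f k ((loop f k a).eval O)).cost O + φ k ((loop f k a).eval O) ≤
      φ (k + 1) ((loop f (k + 1) a).eval O) + c k) :
    (loop f m a).cost O + φ 0 a ≤ φ m ((loop f m a).eval O) + ∑ k ∈ range m, c k := by
  induction m with
  | zero => simp
  | succ m ih =>
    have hprev := ih fun k hk => h k (hk.trans m.lt_succ_self)
    have hlast := h m m.lt_succ_self
    rw [sum_range_succ, loop_succ, cost_bind]
    rw [loop_succ] at hlast
    lia

end Semantics

section Strategy

variable {n : ℕ} {z : Fin n → Bool} {π : Equiv.Perm (Fin n)}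

theorem histScores_strategy_node (q : Fin n → Bool) (f : ℕ → QueryTree (Fin n → Bool) ℕ α)
    (k : ℕ) : histScores n (node q f).strategy z π (k + 1) =
      score n z π q :: histScores n (f (score n z π q)).strategy z π k := by
  induction k with
  | zero => rfl
  | succ k ih => rw [histScores, ih]; rfl

theorem eval_score_eq_of_histScores {z' : Fin n → Bool} {π' : Equiv.Perm (Fin n)}
    (p : QueryTree (Fin n → Bool) ℕ α)
    (h : ∀ k < p.cost (score n z π), score n z' π' (p.strategy (histScores n p.strategy z π k)) =
      score n z π (p.strategy (histScores n p.strategy z π k))) :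
    p.eval (score n z' π') = p.eval (score n z π) := by
  induction p with
  | leaf a => rfl
  | node q f ih =>
    have hq : score n z' π' q = score n z π q := h 0 (Nat.succ_pos _)
    rw [eval_node, eval_node, hq]
    refine ih _ fun k hk => ?_
    have hnext := h (k + 1) (Nat.succ_lt_succ hk)
    rw [histScores_strategy_node] at hnext
    exact hnext

theorem timeToIdentify_strategy_le (p : QueryTree (Fin n → Bool) ℕ α)
    (hp : ∀ z' π', p.eval (score n z' π') = p.eval (score n z π) → z' = z ∧ π' = π) :
    timeToIdentify n p.strategy z π ≤ p.cost (score n z π) :=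
  sInf_le ⟨_, rfl, fun z' π' h => hp z' π' (eval_score_eq_of_histScores p h)⟩

end Strategy

end QueryTree

/-! ### Truncated scores -/

variable {n : ℕ} {w : Fin n → Bool} {π : Equiv.Perm (Fin n)}

/-- The score cut off at `C`, for the secret `(z, π)` given by `w = z ∘ π` and `π`. -/
def truncScore (w : Fin n → Bool) (π : Equiv.Perm (Fin n)) (C : ℕ) (x : Fin n → Bool) : ℕ :=
  Nat.findGreatest (fun i => ∀ j : Fin n, (j : ℕ) < i → w j = x (π j)) C

/-- The query `x` with the bits at the positions in `F` flipped. -/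
def flipOn (F : Finset (Fin n)) (x : Fin n → Bool) : Fin n → Bool :=
  F.piecewise (fun p => !x p) x

theorem score_comp_perm (z : Fin n → Bool) (π σ : Equiv.Perm (Fin n)) (x : Fin n → Bool) :
    score n z π (x ∘ σ) = truncScore (z ∘ π) (σ * π) n x := rfl

theorem le_truncScore {C i : ℕ} {x : Fin n → Bool} :
    i ≤ truncScore w π C x ↔ i ≤ C ∧ ∀ j : Fin n, (j : ℕ) < i → w j = x (π j) := by
  refine ⟨fun h => ⟨h.trans (Nat.findGreatest_le C), fun j hj => ?_⟩, fun h =>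
    Nat.le_findGreatest h.1 h.2⟩
  exact Nat.findGreatest_spec (P := fun i => ∀ j : Fin n, (j : ℕ) < i → w j = x (π j))
    (Nat.zero_le C) (fun _ hj => absurd hj (Nat.not_lt_zero _)) j (hj.trans_le h)

theorem min_truncScore {C D : ℕ} (h : D ≤ C) (x : Fin n → Bool) :
    min (truncScore w π C x) D = truncScore w π D x :=
  eq_of_forall_le_iff fun i => by
    simp only [le_min_iff, le_truncScore]
    exact ⟨fun hi => ⟨hi.2, hi.1.2⟩, fun hi => ⟨⟨hi.1.trans h, hi.2⟩, hi.1⟩⟩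

theorem truncScore_congr {π' : Equiv.Perm (Fin n)} {C : ℕ}
    (h : ∀ j : Fin n, (j : ℕ) < C → π j = π' j) : truncScore w π C = truncScore w π' C := by
  funext x
  refine eq_of_forall_le_iff fun i => ?_
  simp only [le_truncScore]
  exact and_congr_right fun hi => forall₂_congr fun j hj => by rw [h j (hj.trans_le hi)]

theorem truncScore_succ_eq_ite {i : Fin n} {x : Fin n → Bool}
    (h : ∀ j : Fin n, (j : ℕ) < i → w j = x (π j)) :
    truncScore w π (i + 1) x = if w i = x (π i) then (i : ℕ) + 1 else i := by
  refine eq_of_forall_le_iff fun k => ?_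
  rw [le_truncScore]
  have hlt (j : Fin n) (hj : (j : ℕ) < k) (hk : k ≤ i + 1) (hne : j ≠ i) : w j = x (π j) :=
    h j (by lia)
  split_ifs with hi
  · refine ⟨And.left, fun hk => ⟨hk, fun j hj => ?_⟩⟩
    obtain rfl | hne := eq_or_ne j i
    exacts [hi, hlt j hj hk hne]
  · refine ⟨fun hk => not_lt.mp fun hik => hi (hk.2 i hik), fun hk => ⟨by lia, fun j hj => ?_⟩⟩
    exact h j (by lia)

theorem eq_flipOn_iff {F : Finset (Fin n)} {x : Fin n → Bool} {b : Bool} {p : Fin n}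
    (h : b = x p) : b = flipOn F x p ↔ p ∉ F := by
  subst h
  by_cases hp : p ∈ F <;> simp [flipOn, hp]

section Flip

variable {s C : ℕ} {x : Fin n → Bool} {F : Finset (Fin n)}

theorem mem_of_truncScore_flipOn_eq (hsC : s ≤ C) (hx : ∀ j : Fin n, (j : ℕ) < s → w j = x (π j))
    {i : Fin n} (hi : (i : ℕ) < s) (h : truncScore w π C (flipOn F x) = i) : π i ∈ F := by
  by_contra hF
  have hsucc : (i : ℕ) + 1 ≤ truncScore w π C (flipOn F x) := by
    refine le_truncScore.mpr ⟨hi.trans_le hsC, fun j hj => ?_⟩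
    obtain rfl | hne := eq_or_ne j i
    · exact (eq_flipOn_iff (hx j hi)).mpr hF
    · exact (le_truncScore.mp h.ge).2 j (by lia)
  lia

theorem exists_truncScore_flipOn_eq (hx : ∀ j : Fin n, (j : ℕ) < s → w j = x (π j))
    {j : Fin n} (hj : (j : ℕ) < s) (hF : π j ∈ F) :
    ∃ i : Fin n, (i : ℕ) < s ∧ truncScore w π C (flipOn F x) = i := by
  have hle : truncScore w π C (flipOn F x) ≤ j := by
    by_contra! hlt
    have hagree := (le_truncScore.mp hlt.nat_succ_le).2 j j.val.lt_succ_self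
    exact (eq_flipOn_iff (hx j hj)).mp hagree hF
  exact ⟨⟨_, hle.trans_lt j.2⟩, hle.trans_lt hj, rfl⟩

end Flip

/-! ### Narrowing candidate sets -/

/-- Algorithms for the HiddenPermutation problem with `n` positions: the queries are bit strings
and the answers are scores. -/
abbrev Program (n : ℕ) (α : Type) := QueryTree (Fin n → Bool) ℕ α

/-- Partial knowledge of the first `s` steps of a secret: the string `x` is correct at their
positions, and step `j` has its position in the candidate set `V j`. -/
structure Sound (s : ℕ) (x : Fin n → Bool) (V : Fin n → Finset (Fin n)) (w : Fin n → Bool)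
    (π : Equiv.Perm (Fin n)) : Prop where
  agree : ∀ j : Fin n, (j : ℕ) < s → w j = x (π j)
  mem : ∀ j : Fin n, (j : ℕ) < s → π j ∈ V j
  disjoint : ∀ j k : Fin n, (j : ℕ) < s → (k : ℕ) < s → j ≠ k → Disjoint (V j) (V k)

/-- `V'` is sound and differs from `V` only in the sets indexed by `G`, which have at most `d`
elements. -/
structure IsRefinement (s : ℕ) (x : Fin n → Bool) (G : Finset (Fin n)) (d : ℕ)
    (V : Fin n → Finset (Fin n)) (w : Fin n → Bool) (π : Equiv.Perm (Fin n))
    (V' : Fin n → Finset (Fin n)) : Prop extends Sound s x V' w π where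
  eq_off : ∀ j ∉ G, V' j = V j
  card_le : ∀ j ∈ G, #(V' j) ≤ d

/-- The state of a simultaneous search for the colors of the positions of several steps: the color
to be tested next, the steps whose color is not known yet, and the current candidate sets. -/
structure Sweep (n : ℕ) where
  color : ℕ
  todo : Finset (Fin n)
  cand : Fin n → Finset (Fin n)

section Narrow

variable {s C b d : ℕ} {x : Fin n → Bool} {V : Fin n → Finset (Fin n)} {G : Finset (Fin n)}
  {χ : Fin n → Fin n → ℕ} {S : Sweep n} {r : ℕ}

theorem Sound.mono {V' : Fin n → Finset (Fin n)} (h : Sound s x V w π) (hsub : ∀ j, V' j ⊆ V j)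
    (hmem : ∀ j : Fin n, (j : ℕ) < s → π j ∈ V' j) : Sound s x V' w π where
  agree := h.agree
  mem := hmem
  disjoint j k hj hk hjk := (h.disjoint j k hj hk hjk).mono (hsub j) (hsub k)

namespace Sweep

/-- The candidates of the current color, over all steps whose color is not known yet. -/
def target (χ : Fin n → Fin n → ℕ) (S : Sweep n) : Finset (Fin n) :=
  S.todo.biUnion fun j => {p ∈ S.cand j | χ j p = S.color}

/-- The state after learning that flipping the target gives the score `r`: the step of index `r`
has the current color, or, if no step searched for has this index, none of them has this color. -/
def update (χ : Fin n → Fin n → ℕ) (S : Sweep n) (r : ℕ) : Sweep n where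
  color := if ∃ j ∈ S.todo, (j : ℕ) = r then S.color else S.color + 1
  todo := {j ∈ S.todo | (j : ℕ) ≠ r}
  cand j := if j ∈ S.todo ∧ (j : ℕ) = r then {p ∈ S.cand j | χ j p = S.color} else S.cand j

/-- The invariant of the search started from the candidate sets `V` for the steps in `G`. -/
structure Valid (s : ℕ) (x : Fin n → Bool) (V : Fin n → Finset (Fin n)) (G : Finset (Fin n))
    (χ : Fin n → Fin n → ℕ) (w : Fin n → Bool) (π : Equiv.Perm (Fin n)) (S : Sweep n) :
    Prop where
  sound : Sound s x S.cand w π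
  todo_subset : S.todo ⊆ G
  cand_subset : ∀ j, S.cand j ⊆ V j
  cand_eq : ∀ j ∉ G, S.cand j = V j
  monochromatic : ∀ j ∈ G, j ∉ S.todo → ∃ c, ∀ p ∈ S.cand j, χ j p = c
  color_le : ∀ j ∈ S.todo, S.color ≤ χ j (π j)

theorem update_cand_subset (j : Fin n) : (S.update χ r).cand j ⊆ S.cand j := by
  simp only [update]
  split_ifs
  exacts [filter_subset _ _, Subset.rfl]

theorem update_color_add_card_todo :
    (S.update χ r).color + #S.todo = S.color + #(S.update χ r).todo + 1 := by
  by_cases hit : ∃ j ∈ S.todo, (j : ℕ) = r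
  · obtain ⟨j, hj, rfl⟩ := hit
    have herase : (S.update χ j).todo = S.todo.erase j := by
      ext k
      simp [update, Fin.val_inj, and_comm]
    rw [herase, card_erase_of_mem hj]
    have := card_pos.mpr ⟨j, hj⟩
    simp only [update, Fin.val_inj, exists_eq_right, hj, if_true]
    lia
  · have hall : (S.update χ r).todo = S.todo :=
      filter_true_of_mem fun j hj hjr => hit ⟨j, hj, hjr⟩
    rw [hall]
    simp only [update, hit, if_false]
    lia

theorem Valid.mem_target_iff (h : S.Valid s x V G χ w π) (hG : ∀ j ∈ G, (j : ℕ) < s) {j : Fin n}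
    (hj : (j : ℕ) < s) : π j ∈ S.target χ ↔ j ∈ S.todo ∧ χ j (π j) = S.color := by
  simp only [target, mem_biUnion, mem_filter]
  refine ⟨?_, fun hcol => ⟨j, hcol.1, h.sound.mem j hj, hcol.2⟩⟩
  rintro ⟨k, hk, hmem, hcol⟩
  obtain rfl : j = k := by
    by_contra hne
    exact disjoint_left.mp (h.sound.disjoint j k hj (hG k (h.todo_subset hk)) hne)
      (h.sound.mem j hj) hmem
  exact ⟨hk, hcol⟩

theorem Valid.update (h : S.Valid s x V G χ w π) (hG : ∀ j ∈ G, (j : ℕ) < s) (hsC : s ≤ C) :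
    (S.update χ (truncScore w π C (flipOn (S.target χ) x))).Valid s x V G χ w π := by
  set r := truncScore w π C (flipOn (S.target χ) x) with hr
  have hhit : ∀ j ∈ S.todo, (j : ℕ) = r → χ j (π j) = S.color := fun j hj hjr =>
    have hjs := hG j (h.todo_subset hj)
    ((h.mem_target_iff hG hjs).mp
      (mem_of_truncScore_flipOn_eq hsC h.sound.agree hjs (hr.symm.trans hjr.symm))).2
  have hmiss (hr' : ¬∃ j ∈ S.todo, (j : ℕ) = r) : ∀ j ∈ S.todo, χ j (π j) ≠ S.color := by
    intro j hj hcol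
    have hjs := hG j (h.todo_subset hj)
    obtain ⟨i, hi, hir⟩ := exists_truncScore_flipOn_eq (C := C) h.sound.agree hjs
      ((h.mem_target_iff hG hjs).mpr ⟨hj, hcol⟩)
    have himem := mem_of_truncScore_flipOn_eq hsC h.sound.agree hi hir
    exact hr' ⟨i, ((h.mem_target_iff hG hi).mp himem).1, hir.symm⟩
  refine ⟨h.sound.mono update_cand_subset fun j hj => ?_, (filter_subset _ _).trans h.todo_subset,
    fun j => (update_cand_subset j).trans (h.cand_subset j), fun j hj => ?_, fun j hj hjt => ?_,
    fun j hj => ?_⟩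
  · simp only [Sweep.update]
    split_ifs with hjr
    exacts [mem_filter.mpr ⟨h.sound.mem j hj, hhit j hjr.1 hjr.2⟩, h.sound.mem j hj]
  · exact (if_neg fun hjr => hj (h.todo_subset hjr.1)).trans (h.cand_eq j hj)
  · by_cases hjr : j ∈ S.todo ∧ (j : ℕ) = r
    · refine ⟨S.color, fun p hp => ?_⟩
      simp only [Sweep.update, hjr, and_self, if_true, mem_filter] at hp
      exact hp.2
    · have hjS : j ∉ S.todo := fun hjS => hjt (mem_filter.mpr ⟨hjS, fun hr' => hjr ⟨hjS, hr'⟩⟩)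
      simpa only [Sweep.update, hjr, if_false] using h.monochromatic j hj hjS
  · have hjS := (mem_filter.mp hj).1
    simp only [Sweep.update]
    split_ifs with hit
    exacts [h.color_le j hjS, (h.color_le j hjS).lt_of_ne' (hmiss hit j hjS)]

end Sweep

/-- Tests one color: flips the bits of the target and reads off which step has this color. -/
def sweep (x : Fin n → Bool) (χ : Fin n → Fin n → ℕ) (S : Sweep n) : Program n (Sweep n) :=
  .node (flipOn (S.target χ) x) fun r => pure (S.update χ r)

/-- Restricts the candidates of each step in `G` to one color class, given colorings `χ` of the
candidate sets with `b` colors. -/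
def narrow (x : Fin n → Bool) (χ : Fin n → Fin n → ℕ) (b : ℕ) (G : Finset (Fin n))
    (V : Fin n → Finset (Fin n)) : Program n (Fin n → Finset (Fin n)) := do
  let S ← QueryTree.loop (fun _ => sweep x χ) (b + #G) ⟨0, G, V⟩
  return S.cand

theorem cost_narrow (O : (Fin n → Bool) → ℕ) : (narrow x χ b G V).cost O = b + #G := by
  have hloop (k : ℕ) (S : Sweep n) : (QueryTree.loop (fun _ => sweep x χ) k S).cost O = k := by
    induction k with
    | zero => rfl
    | succ k ih => simp [ih, sweep]
  simp [narrow, hloop]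

theorem narrow_spec (hV : Sound s x V w π) (hsC : s ≤ C) (hG : ∀ j ∈ G, (j : ℕ) < s)
    (hχ : ∀ j ∈ G, χ j (π j) < b) :
    ∃ S : Sweep n, (narrow x χ b G V).eval (truncScore w π C) = S.cand ∧ S.todo = ∅ ∧
      S.Valid s x V G χ w π := by
  obtain ⟨hvalid, hcount⟩ := QueryTree.eval_loop_induction (O := truncScore w π C)
    (f := fun _ => sweep x χ) (a := ⟨0, G, V⟩)
    (fun k S => S.Valid s x V G χ w π ∧ S.color + #G = k + #S.todo)
    ⟨⟨hV, Subset.rfl, fun _ => Subset.rfl, fun _ _ => rfl, fun _ h h' => absurd h h',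
      fun _ _ => Nat.zero_le _⟩, rfl⟩
    (fun k _ S hS => ⟨hS.1.update hG hsC, by
      have := S.update_color_add_card_todo (χ := χ)
        (r := truncScore w π C (flipOn (S.target χ) x))
      simp only [sweep, QueryTree.eval_node, QueryTree.eval_pure]
      lia⟩) (b + #G) le_rfl
  refine ⟨_, by simp [narrow], ?_, hvalid⟩
  refine eq_empty_of_forall_notMem fun j hj => ?_
  have hcolor := hvalid.color_le j hj
  have hlt := hχ j (hvalid.todo_subset hj)
  lia

/-- The index of the block containing `p` when `S` is cut in increasing order into blocks of
`d` elements. -/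
def blockIndex {α : Type*} [LinearOrder α] (S : Finset α) (d : ℕ) (p : α) : ℕ :=
  #{q ∈ S | q < p} / d

theorem blockIndex_lt {α : Type*} [LinearOrder α] {S : Finset α} {p : α} (hp : p ∈ S)
    (hS : #S ≤ b * d) : blockIndex S d p < b :=
  have hlt : #{q ∈ S | q < p} < #S := card_lt_card (filter_ssubset.mpr ⟨p, hp, lt_irrefl p⟩)
  Nat.div_lt_of_lt_mul (hlt.trans_le (hS.trans_eq (mul_comm b d)))

theorem card_filter_blockIndex_eq_le {α : Type*} [LinearOrder α] (S : Finset α) (hd : 0 < d)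
    (c : ℕ) : #{p ∈ S | blockIndex S d p = c} ≤ d := by
  have hrank : StrictMonoOn (fun p => #{q ∈ S | q < p}) S := fun p hp q _ hpq =>
    card_lt_card <| (ssubset_iff_of_subset fun r hr => by
      rw [mem_filter] at hr ⊢
      exact ⟨hr.1, hr.2.trans hpq⟩).mpr ⟨p, by simp_all⟩
  calc #{p ∈ S | blockIndex S d p = c}
      ≤ #(Ico (c * d) (c * d + d)) := by
        refine card_le_card_of_injOn (fun p => #{q ∈ S | q < p}) (fun p hp => ?_)
          (hrank.injOn.mono fun p hp => (mem_filter.mp hp).1)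
        have hc := (mem_filter.mp hp).2
        rw [blockIndex, Nat.div_eq_iff hd] at hc
        rw [coe_Ico, Set.mem_Ico]
        lia
    _ = d := by simp

/-- Cuts each candidate set indexed by `G` into `b` blocks of `d` elements and keeps one block. -/
def refine (x : Fin n → Bool) (V : Fin n → Finset (Fin n)) (G : Finset (Fin n)) (b d : ℕ) :
    Program n (Fin n → Finset (Fin n)) :=
  narrow x (fun j => blockIndex (V j) d) b G V

theorem cost_refine (O : (Fin n → Bool) → ℕ) : (refine x V G b d).cost O = b + #G :=
  cost_narrow O

theorem isRefinement_refine (hV : Sound s x V w π) (hsC : s ≤ C) (hG : ∀ j ∈ G, (j : ℕ) < s)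
    (hd : 0 < d) (hcard : ∀ j ∈ G, #(V j) ≤ b * d) :
    IsRefinement s x G d V w π ((refine x V G b d).eval (truncScore w π C)) := by
  obtain ⟨S, hS, htodo, hvalid⟩ := narrow_spec hV hsC hG (χ := fun j => blockIndex (V j) d)
    fun j hj => blockIndex_lt (hV.mem j (hG j hj)) (hcard j hj)
  rw [refine, hS]
  refine ⟨hvalid.sound, hvalid.cand_eq, fun j hj => ?_⟩
  obtain ⟨c, hc⟩ := hvalid.monochromatic j hj (htodo ▸ notMem_empty j)
  exact (card_le_card fun p hp => mem_filter.mpr ⟨hvalid.cand_subset j hp, hc p hp⟩).trans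
    (card_filter_blockIndex_eq_le (V j) hd c)

/-- Halves the candidate sets indexed by `G` for `k` rounds, from size `d * 2 ^ k` to size `d`. -/
def halve (x : Fin n → Bool) (G : Finset (Fin n)) (d : ℕ) :
    ℕ → (Fin n → Finset (Fin n)) → Program n (Fin n → Finset (Fin n))
  | 0, V => pure V
  | k + 1, V => refine x V G 2 (d * 2 ^ k) >>= halve x G d k

theorem cost_halve (O : (Fin n → Bool) → ℕ) (k : ℕ) (V : Fin n → Finset (Fin n)) :
    (halve x G d k V).cost O = k * (2 + #G) := by
  induction k generalizing V with
  | zero => simp [halve]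
  | succ k ih => rw [halve, QueryTree.cost_bind, ih, cost_refine]; ring

theorem isRefinement_halve (hsC : s ≤ C) (hG : ∀ j ∈ G, (j : ℕ) < s) (hd : 0 < d) {k : ℕ}
    {V : Fin n → Finset (Fin n)} (hV : Sound s x V w π) (hcard : ∀ j ∈ G, #(V j) ≤ d * 2 ^ k) :
    IsRefinement s x G d V w π ((halve x G d k V).eval (truncScore w π C)) := by
  induction k generalizing V with
  | zero => exact ⟨hV, fun _ _ => rfl, fun j hj => (hcard j hj).trans_eq (mul_one d)⟩
  | succ k ih =>
    have h := isRefinement_refine hV hsC hG (b := 2) (d := d * 2 ^ k) (by positivity)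
      fun j hj => (hcard j hj).trans_eq (by ring)
    have h' := ih h.toSound h.card_le
    rw [halve, QueryTree.eval_bind]
    exact ⟨h'.toSound, fun j hj => (h'.eq_off j hj).trans (h.eq_off j hj), h'.card_le⟩

end Narrow

/-! ### States and levels -/

/-- The parameters of the algorithm: a step at level `e` has at most `2 ^ sizeExp e` candidates,
and moves to level `e + 1` in a group of at least `2 ^ splitExp e` steps, which makes the queries
of this move cost `O(1)` per step. -/
structure Schedule (n : ℕ) where
  /-- The last level, where the position of a step is known. -/
  levels : ℕ
  /-- The binary logarithm of the number of candidates allowed at a level. -/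
  sizeExp : ℕ → ℕ
  /-- The binary logarithm of the size of the groups in which steps leave a level. -/
  splitExp : ℕ → ℕ
  /-- The number of halvings that bring a new step to level `0`. -/
  rounds : ℕ
  sizeExp_le : ∀ e, sizeExp e ≤ splitExp e + sizeExp (e + 1)
  sizeExp_levels : sizeExp levels = 0
  le_two_pow : n ≤ 2 ^ (sizeExp 0 + rounds)

/-- The cost of isolating the positions of at most `2 ^ splitExp e` steps at level `e`. -/
def Schedule.finalizeCost (P : Schedule n) (e : ℕ) : ℕ :=
  P.sizeExp e * (2 + 2 ^ P.splitExp e)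

/-- What the algorithm remembers about the steps treated so far. -/
structure State (n : ℕ) where
  /-- A query that agrees with the secret on these steps. -/
  guess : Fin n → Bool
  /-- The candidates for the position of each step. -/
  cand : Fin n → Finset (Fin n)
  level : Fin n → ℕ

/-- The positions that are candidates for none of the first `s` steps. -/
def unused (s : ℕ) (V : Fin n → Finset (Fin n)) : Finset (Fin n) :=
  {p | ∀ j : Fin n, (j : ℕ) < s → p ∉ V j}

namespace State

/-- The steps at level `e` among the first `s`. -/
def group (σ : State n) (s e : ℕ) : Finset (Fin n) := {j | (j : ℕ) < s ∧ σ.level j = e}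

/-- Moves the steps in `G` to level `e` and replaces the candidate sets. -/
def move (σ : State n) (V : Fin n → Finset (Fin n)) (G : Finset (Fin n)) (e : ℕ) : State n where
  guess := σ.guess
  cand := V
  level j := if j ∈ G then e else σ.level j

/-- The potential that pays for moving steps between levels. -/
def potential (σ : State n) (s : ℕ) : ℕ :=
  ∑ j ∈ ({j | (j : ℕ) < s} : Finset (Fin n)), σ.level j

/-- A sound state that respects the sizes prescribed by the levels. -/
structure Valid (P : Schedule n) (s : ℕ) (w : Fin n → Bool) (π : Equiv.Perm (Fin n))
    (σ : State n) : Prop extends Sound s σ.guess σ.cand w π where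
  level_le : ∀ j : Fin n, (j : ℕ) < s → σ.level j ≤ P.levels
  card_le : ∀ j : Fin n, (j : ℕ) < s → #(σ.cand j) ≤ 2 ^ P.sizeExp (σ.level j)

/-- A valid state without groups large enough to leave their level. -/
structure Settled (P : Schedule n) (s : ℕ) (w : Fin n → Bool) (π : Equiv.Perm (Fin n))
    (σ : State n) : Prop extends Valid P s w π σ where
  card_group_lt : ∀ e < P.levels, #(σ.group s e) < 2 ^ P.splitExp e

/-- The relation between a state `σ` and a later one in which some steps were moved to the last
level `t` and nothing else has changed. -/
def FinalizedFrom (t : ℕ) (σ σ' : State n) : Prop :=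
  ∀ j, σ'.level j = t ∨ σ'.level j = σ.level j ∧ σ'.cand j = σ.cand j

/-- The positions that may force level `e` to be finalized when they come next: the candidates of
the steps at the levels from `e` on that are not isolated yet. -/
def collisionSet (P : Schedule n) (σ : State n) (s e : ℕ) : Finset (Fin n) :=
  (Ico e P.levels).biUnion fun f => (σ.group s f).biUnion σ.cand

/-- A bound for the cost of the finalizations caused by the next step having position `p`. -/
def collisionCost (P : Schedule n) (σ : State n) (s : ℕ) (p : Fin n) : ℕ :=
  ∑ e ∈ range P.levels, if p ∈ σ.collisionSet P s e then P.finalizeCost e else 0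

variable {P : Schedule n} {s t e e' f : ℕ} {σ σ' σ'' : State n} {G : Finset (Fin n)}
  {V : Fin n → Finset (Fin n)}

@[simp]
theorem mem_group {j : Fin n} : j ∈ σ.group s e ↔ (j : ℕ) < s ∧ σ.level j = e := by simp [group]

theorem group_move (hf : f ≠ e') : (σ.move V (σ.group s e) e').group s f =
    if f = e then ∅ else σ.group s f := by
  ext j
  by_cases hj : j ∈ σ.group s e
  · have hmove : (σ.move V (σ.group s e) e').level j = e' := if_pos hj
    rw [mem_group] at hj
    split_ifs with hfe <;> simp only [mem_group, hmove, notMem_empty] <;> lia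
  · have hmove : (σ.move V (σ.group s e) e').level j = σ.level j := if_neg hj
    rw [mem_group] at hj
    split_ifs with hfe <;> simp only [mem_group, hmove, notMem_empty]
    lia

theorem potential_move_succ :
    (σ.move V (σ.group s e) (e + 1)).potential s = σ.potential s + #(σ.group s e) := by
  have hlevel (j : Fin n) : (σ.move V (σ.group s e) (e + 1)).level j =
      σ.level j + if j ∈ σ.group s e then 1 else 0 := by
    simp only [move]
    split_ifs with hj
    exacts [congrArg (· + 1) (mem_group.mp hj).2.symm, rfl]
  have hsub : σ.group s e ⊆ ({j | (j : ℕ) < s} : Finset (Fin n)) := fun j hj => by simp_all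
  simp only [potential, hlevel, sum_add_distrib, sum_boole, filter_mem_eq_inter,
    inter_eq_right.mpr hsub, Nat.cast_id]

theorem potential_le_potential_move {i : Fin n} :
    σ.potential i ≤ (σ.move V {i} e).potential (i + 1) := by
  refine (sum_le_sum fun j hj => ?_).trans (sum_le_sum_of_subset fun j hj => ?_)
  · have hji : j ≠ i := by
      rintro rfl
      simp at hj
    simp [move, hji]
  · simp only [mem_filter, mem_univ, true_and] at hj ⊢
    lia

theorem Valid.move (hV : IsRefinement s σ.guess G (2 ^ P.sizeExp e) σ.cand w π V)
    (he : e ≤ P.levels) (hlevel : ∀ j : Fin n, (j : ℕ) < s → j ∉ G → σ.level j ≤ P.levels)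
    (hcard : ∀ j : Fin n, (j : ℕ) < s → j ∉ G → #(σ.cand j) ≤ 2 ^ P.sizeExp (σ.level j)) :
    (σ.move V G e).Valid P s w π where
  toSound := hV.toSound
  level_le j hj := by
    simp only [State.move]
    split_ifs with hjG
    exacts [he, hlevel j hj hjG]
  card_le j hj := by
    simp only [State.move]
    split_ifs with hjG
    exacts [hV.card_le j hjG, (hV.eq_off j hjG).symm ▸ hcard j hj hjG]

theorem Valid.eq_of_mem_cand_of_level_eq (h : σ.Valid P s w π) {j k : Fin n} (hj : (j : ℕ) < s)
    (hlevel : σ.level j = P.levels) (hk : π k ∈ σ.cand j) : k = j := by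
  have hcard := h.card_le j hj
  rw [hlevel, P.sizeExp_levels, pow_zero] at hcard
  exact π.injective (card_le_one.mp hcard _ hk _ (h.mem j hj))

theorem FinalizedFrom.refl (t : ℕ) (σ : State n) : FinalizedFrom t σ σ := fun _ => .inr ⟨rfl, rfl⟩

theorem FinalizedFrom.trans (h : FinalizedFrom t σ σ') (h' : FinalizedFrom t σ' σ'') :
    FinalizedFrom t σ σ'' := fun j => by
  rcases h j, h' j with ⟨h | h, h' | h'⟩ <;> simp_all

theorem FinalizedFrom.potential_le (h : FinalizedFrom P.levels σ σ') (hσ : σ.Valid P s w π) :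
    σ.potential s ≤ σ'.potential s :=
  sum_le_sum fun j hj => (h j).elim
    (fun ht => ht ▸ hσ.level_le j (mem_filter.mp hj).2) fun heq => heq.1.ge

theorem FinalizedFrom.group_subset (h : FinalizedFrom t σ σ') (he : e < t) :
    σ'.group s e ⊆ σ.group s e := fun j hj => by
  rw [mem_group] at hj ⊢
  exact ⟨hj.1, (h j).elim (fun ht => absurd (ht.symm.trans hj.2) he.ne') fun heq =>
    heq.1.symm.trans hj.2⟩

theorem FinalizedFrom.settled (h : FinalizedFrom P.levels σ σ') (hσ : σ.Settled P s w π)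
    (hσ' : σ'.Valid P s w π) : σ'.Settled P s w π where
  toValid := hσ'
  card_group_lt e he := (card_le_card (h.group_subset he)).trans_lt (hσ.card_group_lt e he)

theorem finalizedFrom_move (h : ∀ j ∉ G, V j = σ.cand j) : FinalizedFrom t σ (σ.move V G t) :=
  fun j => by
    by_cases hj : j ∈ G
    exacts [.inl (if_pos hj), .inr ⟨if_neg hj, h j hj⟩]

theorem Valid.mem_collisionSet (h : σ'.Valid P s w π) (hfin : FinalizedFrom P.levels σ σ')
    (hlevel : ∀ j : Fin n, (j : ℕ) < s → e ≤ σ'.level j) {k : Fin n} (hk : s ≤ k)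
    (hused : π k ∉ unused s σ'.cand) : π k ∈ σ.collisionSet P s e := by
  simp only [unused, mem_filter, mem_univ, true_and, not_forall, not_not] at hused
  obtain ⟨j, hj, hmem⟩ := hused
  have hne : σ'.level j ≠ P.levels := fun hlast => by
    have := h.eq_of_mem_cand_of_level_eq hj hlast hmem
    lia
  obtain ⟨hlevel_eq, hcand_eq⟩ := (hfin j).resolve_left hne
  simp only [collisionSet, mem_biUnion, mem_group, mem_Ico]
  exact ⟨σ'.level j, ⟨hlevel j hj, (h.level_le j hj).lt_of_ne hne⟩, j, ⟨hj, hlevel_eq.symm⟩,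
    hcand_eq ▸ hmem⟩

theorem Settled.card_collisionSet_le (h : σ.Settled P s w π) (e : ℕ) :
    #(σ.collisionSet P s e) ≤ ∑ f ∈ Ico e P.levels, 2 ^ P.splitExp f * 2 ^ P.sizeExp f := by
  refine card_biUnion_le.trans (sum_le_sum fun f hf => ?_)
  refine (card_biUnion_le_card_mul _ _ (2 ^ P.sizeExp f) fun j hj => ?_).trans
    (Nat.mul_le_mul_right _ (h.card_group_lt f (mem_Ico.mp hf).2).le)
  obtain ⟨hjs, rfl⟩ := mem_group.mp hj
  exact h.card_le j hjs

end State

theorem Sound.extend {x y : Fin n → Bool} {V : Fin n → Finset (Fin n)} {i : Fin n}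
    (h : Sound i x V w π) (hi : π i ∈ unused i V)
    (hy : ∀ j : Fin n, (j : ℕ) < i + 1 → w j = y (π j)) :
    Sound (i + 1) y (Function.update V i (unused i V)) w π where
  agree := hy
  mem j hj := by
    obtain rfl | hne := eq_or_ne j i
    · rwa [Function.update_self]
    · rw [Function.update_of_ne hne]
      exact h.mem j (by lia)
  disjoint j k hj hk hjk := by
    have hnew (j : Fin n) (hj : (j : ℕ) < i) : Disjoint (V j) (unused i V) :=
      disjoint_right.mpr fun p hp => (mem_filter.mp hp).2 j hj
    obtain rfl | hji := eq_or_ne j i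
    · rw [Function.update_self, Function.update_of_ne hjk.symm]
      exact (hnew k (by lia)).symm
    obtain rfl | hki := eq_or_ne k i
    · rw [Function.update_self, Function.update_of_ne hji]
      exact hnew j (by lia)
    · rw [Function.update_of_ne hji, Function.update_of_ne hki]
      exact h.disjoint j k (by lia) (by lia) hjk

/-! ### The algorithm -/

/-- Isolates the positions of the steps at level `e` among the first `s`. -/
def finalize (P : Schedule n) (s e : ℕ) (σ : State n) : Program n (State n) := do
  let V ← halve σ.guess (σ.group s e) 1 (P.sizeExp e) σ.cand
  return σ.move V (σ.group s e) P.levels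

/-- Extends the guess `x` to step `i` if the position of this step is unused. -/
def probe (i : Fin n) (x : Fin n → Bool) (V : Fin n → Finset (Fin n)) :
    Program n (Option (Fin n → Bool)) :=
  .node x fun r => .node (flipOn (unused i V) x) fun r' =>
    pure (if r = r' then none else if i < r then some x else some (flipOn (unused i V) x))

/-- Finalizes level `e` if the position of step `i` is a candidate for an earlier step. -/
def clearLevel (P : Schedule n) (i : Fin n) (e : ℕ) (σ : State n) : Program n (State n) := do
  match ← probe i σ.guess σ.cand with
  | none => finalize P i e σ
  | some _ => return σ

/-- Finalizes levels, from level `0` on, until the position of step `i` is unused. -/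
def clear (P : Schedule n) (i : Fin n) : State n → Program n (State n) :=
  QueryTree.loop (clearLevel P i) P.levels

/-- Extends the guess to step `i` and brings this step to level `0`. -/
def insert (P : Schedule n) (i : Fin n) (σ : State n) : Program n (State n) := do
  let σ ← clear P i σ
  let y := (← probe i σ.guess σ.cand).getD σ.guess
  let V ← halve y {i} (2 ^ P.sizeExp 0) P.rounds (Function.update σ.cand i (unused i σ.cand))
  return { σ with guess := y }.move V {i} 0

/-- Moves the steps at level `e` to level `e + 1` if there are enough of them. -/
def promote (P : Schedule n) (s e : ℕ) (σ : State n) : Program n (State n) := do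
  if 2 ^ P.splitExp e ≤ #(σ.group s e) then
    let V ← refine σ.guess σ.cand (σ.group s e) (2 ^ P.splitExp e) (2 ^ P.sizeExp (e + 1))
    return σ.move V (σ.group s e) (e + 1)
  else return σ

/-- Moves all large groups to the next level, from level `0` on. -/
def cascade (P : Schedule n) (s : ℕ) : State n → Program n (State n) :=
  QueryTree.loop (promote P s) P.levels

/-- Phase `s` of the algorithm: treats step `s`. Its scores are cut off at `s + 1`, which makes it
independent of the later steps. -/
def phase (P : Schedule n) (s : ℕ) (σ : State n) : Program n (State n) :=
  if h : s < n then (insert P ⟨s, h⟩ σ >>= cascade P (s + 1)).translate id (min · (s + 1))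
  else pure σ

/-- The first `s` phases. -/
def learn (P : Schedule n) (s : ℕ) : Program n (State n) :=
  QueryTree.loop (phase P) s ⟨fun _ => false, fun _ => ∅, fun _ => 0⟩

/-- Isolates the positions of all steps. -/
def finalizeAll (P : Schedule n) : State n → Program n (State n) :=
  QueryTree.loop (finalize P n) P.levels

/-- The algorithm: the phases make the guess agree with the secret, and isolating all positions then
reveals the permutation. -/
def solve (P : Schedule n) : Program n (State n) := learn P n >>= finalizeAll P

section Correctness

open State QueryTree

variable {P : Schedule n} {s C e : ℕ} {σ σ' : State n} {i : Fin n}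

theorem cost_finalize (O : (Fin n → Bool) → ℕ) :
    (finalize P s e σ).cost O = P.sizeExp e * (2 + #(σ.group s e)) := by
  simp [finalize, cost_halve]

theorem cost_finalize_le_finalizeCost (hσ : σ.Settled P s w π) (he : e < P.levels)
    (O : (Fin n → Bool) → ℕ) : (finalize P s e σ).cost O ≤ P.finalizeCost e := by
  have := (hσ.card_group_lt e he).le
  rw [cost_finalize, Schedule.finalizeCost]
  gcongr

theorem isRefinement_finalize (hσ : σ.Valid P s w π) (hsC : s ≤ C) :
    IsRefinement s σ.guess (σ.group s e) 1 σ.cand w π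
      ((finalize P s e σ).eval (truncScore w π C)).cand := by
  have := isRefinement_halve hsC (fun j hj => (mem_group.mp hj).1) one_pos hσ.toSound
    (k := P.sizeExp e) (G := σ.group s e) fun j hj => by
      rw [one_mul, ← (mem_group.mp hj).2]
      exact hσ.card_le j (mem_group.mp hj).1
  simpa [finalize, move] using this

theorem finalize_spec (hσ : σ.Settled P s w π) (hsC : s ≤ C) (he : e < P.levels)
    (hlevel : ∀ j : Fin n, (j : ℕ) < s → e ≤ σ.level j) :
    let σ' := (finalize P s e σ).eval (truncScore w π C)
    σ'.Settled P s w π ∧ FinalizedFrom P.levels σ σ' ∧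
      ∀ j : Fin n, (j : ℕ) < s → e + 1 ≤ σ'.level j := by
  intro σ'
  have hV := isRefinement_finalize hσ.toValid hsC (e := e)
  have heval : σ' = σ.move σ'.cand (σ.group s e) P.levels := by simp [σ', finalize, move]
  have hfin : FinalizedFrom P.levels σ σ' := heval ▸ finalizedFrom_move hV.eq_off
  refine ⟨hfin.settled hσ ?_, hfin, fun j hj => ?_⟩
  · rw [heval]
    exact .move (by simpa [P.sizeExp_levels] using hV) le_rfl (fun j hj _ => hσ.level_le j hj)
      fun j hj _ => hσ.card_le j hj
  · rw [heval]
    simp only [move, mem_group, hj, true_and]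
    split_ifs with hje
    exacts [he, (hlevel j hj).lt_of_ne' hje]

theorem cost_probe (O : (Fin n → Bool) → ℕ) (x : Fin n → Bool) (V : Fin n → Finset (Fin n)) :
    (probe i x V).cost O = 2 := rfl

theorem probe_spec {x : Fin n → Bool} {V : Fin n → Finset (Fin n)} (hV : Sound i x V w π) :
    (∃ y, (probe i x V).eval (truncScore w π (i + 1)) = some y ∧ π i ∈ unused i V ∧
      ∀ j : Fin n, (j : ℕ) < i + 1 → w j = y (π j)) ∨
    (probe i x V).eval (truncScore w π (i + 1)) = none ∧ π i ∉ unused i V := by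
  have hflip (j : Fin n) (hj : (j : ℕ) < i) : w j = flipOn (unused i V) x (π j) :=
    (eq_flipOn_iff (hV.agree j hj)).mpr fun h => (mem_filter.mp h).2 j hj (hV.mem j hj)
  have hextend {y : Fin n → Bool} (hy : ∀ j : Fin n, (j : ℕ) < i → w j = y (π j))
      (hi : w i = y (π i)) (j : Fin n) (hj : (j : ℕ) < i + 1) : w j = y (π j) := by
    obtain rfl | hne := eq_or_ne j i
    exacts [hi, hy j (by lia)]
  have hflip_eq :
      flipOn (unused i V) x (π i) = if π i ∈ unused i V then !x (π i) else x (π i) := rfl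
  simp only [probe, eval_node, eval_pure, truncScore_succ_eq_ite hV.agree,
    truncScore_succ_eq_ite hflip]
  by_cases hi : π i ∈ unused i V <;> by_cases hx : w i = x (π i)
  · exact .inl ⟨x, by simp [hflip_eq, hi, hx], hi, hextend hV.agree hx⟩
  · refine .inl ⟨flipOn (unused i V) x, by simp [hflip_eq, hi, hx], hi, hextend hflip ?_⟩
    simp [hflip_eq, hi, Bool.eq_not.mpr hx]
  · exact .inr ⟨by simp [hflip_eq, hi, hx], hi⟩
  · exact .inr ⟨by simp [hflip_eq, hi, hx], hi⟩

/-- The invariant of clearing started from the state `σ₀`: once the first `e` levels are treated,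
the position of step `i` is unused or they are empty. -/
structure Clearing (P : Schedule n) (i : Fin n) (w : Fin n → Bool) (π : Equiv.Perm (Fin n))
    (σ₀ : State n) (e : ℕ) (σ : State n) : Prop where
  settled : σ.Settled P i w π
  finalizedFrom : FinalizedFrom P.levels σ₀ σ
  unused_or_le_level : π i ∈ unused i σ.cand ∨ ∀ j : Fin n, (j : ℕ) < i → e ≤ σ.level j

theorem clearLevel_spec {σ₀ : State n} (h : Clearing P i w π σ₀ e σ) (he : e < P.levels) :
    Clearing P i w π σ₀ (e + 1) ((clearLevel P i e σ).eval (truncScore w π (i + 1))) ∧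
      (clearLevel P i e σ).cost (truncScore w π (i + 1)) ≤
        2 + if π i ∈ σ₀.collisionSet P i e then P.finalizeCost e else 0 := by
  rcases probe_spec h.settled.toSound with ⟨y, hy, hi, -⟩ | ⟨hnone, hi⟩
  · simp only [clearLevel, eval_bind, cost_bind, hy, eval_pure, cost_pure, cost_probe]
    exact ⟨⟨h.settled, h.finalizedFrom, .inl hi⟩, Nat.le_add_right _ _⟩
  · have hlevel := h.unused_or_le_level.resolve_left hi
    have hcoll := h.settled.mem_collisionSet h.finalizedFrom hlevel le_rfl hi
    obtain ⟨hsettled, hfin, hlevel'⟩ :=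
      finalize_spec h.settled (Nat.le_succ i) he hlevel
    simp only [clearLevel, eval_bind, cost_bind, hnone, cost_probe, if_pos hcoll]
    exact ⟨⟨hsettled, h.finalizedFrom.trans hfin, .inr hlevel'⟩,
      Nat.add_le_add_left (cost_finalize_le_finalizeCost h.settled he _) 2⟩

theorem clearing_loop (hσ : σ.Settled P i w π) :
    ∀ k ≤ P.levels, Clearing P i w π σ k
      ((loop (clearLevel P i) k σ).eval (truncScore w π (i + 1))) :=
  eval_loop_induction _ ⟨hσ, .refl _ σ, .inr fun _ _ => Nat.zero_le _⟩
    fun _ hk _ h => (clearLevel_spec h hk).1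

theorem clear_spec (hσ : σ.Settled P i w π) :
    let σ' := (clear P i σ).eval (truncScore w π (i + 1))
    σ'.Settled P i w π ∧ FinalizedFrom P.levels σ σ' ∧ π i ∈ unused i σ'.cand := by
  intro σ'
  have h : Clearing P i w π σ P.levels σ' := clearing_loop hσ P.levels le_rfl
  refine ⟨h.settled, h.finalizedFrom, h.unused_or_le_level.elim id fun hlevel => ?_⟩
  by_contra hi
  have hcoll := h.settled.mem_collisionSet h.finalizedFrom hlevel le_rfl hi
  simp [collisionSet] at hcoll

theorem cost_clear_le (hσ : σ.Settled P i w π) :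
    (clear P i σ).cost (truncScore w π (i + 1)) ≤
      2 * P.levels + σ.collisionCost P i (π i) := by
  have hloop := cost_loop_add_potential_le (O := truncScore w π (i + 1)) (f := clearLevel P i)
    (a := σ) (fun _ _ => 0) fun k hk => by
      simpa only [Nat.zero_add, Nat.add_zero] using
        (clearLevel_spec (clearing_loop hσ k hk.le) hk).2
  rw [sum_add_distrib] at hloop
  simpa [clear, collisionCost, mul_comm] using hloop

theorem insert_spec (hσ : σ.Settled P i w π) :
    let σ' := (insert P i σ).eval (truncScore w π (i + 1))
    σ'.Valid P (i + 1) w π ∧ σ.potential i ≤ σ'.potential (i + 1) := by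
  intro σ'
  obtain ⟨hσ₁, hfin, hi⟩ := clear_spec hσ
  set σ₁ := (clear P i σ).eval (truncScore w π (i + 1)) with hσ₁_def
  obtain ⟨y, hy, -, hagree⟩ := (probe_spec hσ₁.toSound).resolve_right fun h => h.2 hi
  have hV := isRefinement_halve le_rfl (d := 2 ^ P.sizeExp 0) (G := {i}) (k := P.rounds) (by simp)
    (by positivity) (hσ₁.toSound.extend hi hagree) fun j _ => (card_le_univ _).trans <| by
      simpa [pow_add] using P.le_two_pow
  set V := (halve y {i} (2 ^ P.sizeExp 0) P.rounds
    (Function.update σ₁.cand i (unused i σ₁.cand))).eval (truncScore w π (i + 1))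
  have heval : σ' = { σ₁ with guess := y }.move V {i} 0 := by
    simp only [σ', insert, eval_bind, ← hσ₁_def, hy, Option.getD_some, eval_pure, V]
  have hlt {j : Fin n} (hj : (j : ℕ) < i + 1) (hji : j ∉ ({i} : Finset (Fin n))) :
      (j : ℕ) < i := by
    have := Fin.val_ne_of_ne (notMem_singleton.mp hji)
    lia
  rw [heval]
  refine ⟨.move ⟨hV.toSound, fun j hj => ?_, hV.card_le⟩ (Nat.zero_le _)
    (fun j hj hji => hσ₁.level_le j (hlt hj hji)) fun j hj hji => hσ₁.card_le j (hlt hj hji),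
    (hfin.potential_le hσ.toValid).trans (potential_le_potential_move (V := V))⟩
  rw [hV.eq_off j hj, Function.update_of_ne (notMem_singleton.mp hj)]

theorem cost_insert_le (hσ : σ.Settled P i w π) :
    (insert P i σ).cost (truncScore w π (i + 1)) ≤
      2 * P.levels + σ.collisionCost P i (π i) + (2 + 3 * P.rounds) := by
  have := cost_clear_le hσ
  simp only [insert, cost_bind, cost_probe, cost_halve, card_singleton, cost_pure]
  lia

theorem promote_spec (hσ : σ.Valid P s w π) (hsC : s ≤ C) (he : e < P.levels) :
    let σ' := (promote P s e σ).eval (truncScore w π C)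
    σ'.Valid P s w π ∧ (∀ f < e, σ'.group s f = σ.group s f) ∧
      #(σ'.group s e) < 2 ^ P.splitExp e ∧
      (promote P s e σ).cost (truncScore w π C) + 2 * σ.potential s ≤ 2 * σ'.potential s := by
  by_cases hlarge : 2 ^ P.splitExp e ≤ #(σ.group s e)
  · have hV := isRefinement_refine hσ.toSound hsC (G := σ.group s e) (b := 2 ^ P.splitExp e)
      (d := 2 ^ P.sizeExp (e + 1)) (fun j hj => (mem_group.mp hj).1) (by positivity)
      fun j hj => by
        obtain ⟨hjs, rfl⟩ := mem_group.mp hj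
        rw [← pow_add]
        exact (hσ.card_le j hjs).trans (Nat.pow_le_pow_right two_pos (P.sizeExp_le _))
    simp only [promote, if_pos hlarge, eval_bind, cost_bind, eval_pure, cost_pure, cost_refine,
      potential_move_succ]
    refine ⟨.move hV he (fun j hj _ => hσ.level_le j hj) fun j hj _ => hσ.card_le j hj,
      fun f hf => ?_, ?_, by lia⟩
    · rw [group_move (by lia), if_neg hf.ne]
    · rw [group_move (by lia), if_pos rfl, card_empty]
      positivity
  · simp only [promote, if_neg hlarge, eval_pure, cost_pure]
    exact ⟨hσ, fun _ _ => trivial, not_le.mp hlarge, by lia⟩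

theorem cascade_spec (hσ : σ.Valid P s w π) (hsC : s ≤ C) :
    let σ' := (cascade P s σ).eval (truncScore w π C)
    σ'.Settled P s w π ∧
      (cascade P s σ).cost (truncScore w π C) + 2 * σ.potential s ≤ 2 * σ'.potential s := by
  have hloop := eval_loop_induction (O := truncScore w π C) (f := promote P s)
    (fun k σ => σ.Valid P s w π ∧ ∀ f < k, #(σ.group s f) < 2 ^ P.splitExp f)
    ⟨hσ, fun f hf => absurd hf (Nat.not_lt_zero f)⟩ fun k hk τ hτ => by
      obtain ⟨hvalid, hgroup, hsmall, -⟩ := promote_spec hτ.1 hsC hk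
      refine ⟨hvalid, fun f hf => ?_⟩
      obtain hf | rfl := (Nat.lt_succ_iff.mp hf).lt_or_eq
      exacts [hgroup f hf ▸ hτ.2 f hf, hsmall]
  have hcost := cost_loop_add_potential_le (O := truncScore w π C) (f := promote P s) (a := σ)
    (fun _ σ => 2 * σ.potential s) (c := 0) fun k hk => by
      simpa using (promote_spec (hloop k hk.le).1 hsC hk).2.2.2
  have hend := hloop P.levels le_rfl
  exact ⟨⟨hend.1, hend.2⟩, by simpa [cascade] using hcost⟩

/-- The state of the algorithm after `s` phases. -/
def stateAt (P : Schedule n) (w : Fin n → Bool) (π : Equiv.Perm (Fin n)) (s : ℕ) : State n :=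
  (learn P s).eval (truncScore w π n)

theorem phase_apply (i : Fin n) (σ : State n) :
    phase P i σ = (insert P i σ >>= cascade P (i + 1)).translate id (min · (i + 1 : ℕ)) :=
  dif_pos i.2

theorem eval_phase (i : Fin n) (σ : State n) : (phase P i σ).eval (truncScore w π n) =
    (insert P i σ >>= cascade P (i + 1)).eval (truncScore w π (i + 1)) := by
  simp only [phase_apply, eval_translate, id, min_truncScore (Nat.succ_le_of_lt i.2)]

theorem cost_phase (i : Fin n) (σ : State n) : (phase P i σ).cost (truncScore w π n) =
    (insert P i σ >>= cascade P (i + 1)).cost (truncScore w π (i + 1)) := by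
  simp only [phase_apply, cost_translate, id, min_truncScore (Nat.succ_le_of_lt i.2)]

theorem phase_spec (hσ : σ.Settled P i w π) :
    let σ' := (phase P i σ).eval (truncScore w π n)
    σ'.Settled P (i + 1) w π ∧
      (phase P i σ).cost (truncScore w π n) + 2 * σ.potential i ≤ 2 * σ'.potential (i + 1) +
        (2 * P.levels + σ.collisionCost P i (π i) + (2 + 3 * P.rounds)) := by
  obtain ⟨hvalid, hpot⟩ := insert_spec hσ
  obtain ⟨hsettled, hcascade⟩ := cascade_spec hvalid le_rfl
  have hinsert := cost_insert_le hσ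
  rw [eval_phase, cost_phase, eval_bind, cost_bind]
  exact ⟨hsettled, by lia⟩

theorem stateAt_succ (s : ℕ) :
    stateAt P w π (s + 1) = (phase P s (stateAt P w π s)).eval (truncScore w π n) :=
  eval_bind ..

theorem stateAt_congr {π' : Equiv.Perm (Fin n)} (hs : s ≤ n)
    (h : ∀ j : Fin n, (j : ℕ) < s → π j = π' j) : stateAt P w π s = stateAt P w π' s := by
  induction s with
  | zero => rfl
  | succ s ih =>
    have hphase (π : Equiv.Perm (Fin n)) := stateAt_succ (P := P) (w := w) (π := π) s ▸
      eval_phase (w := w) (π := π) ⟨s, hs⟩ (stateAt P w π s)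
    rw [hphase π, hphase π', ih (Nat.le_of_succ_le hs) fun j hj => h j (hj.trans s.lt_succ_self),
      truncScore_congr h]

theorem settled_stateAt : ∀ s ≤ n, (stateAt P w π s).Settled P s w π :=
  eval_loop_induction _
    { agree := by simp, mem := by simp, disjoint := by simp, level_le := by simp,
      card_le := by simp, card_group_lt := by simp [group] }
    fun s hs _ hσ => (phase_spec (i := ⟨s, hs⟩) hσ).1

theorem cost_learn_le : (learn P n).cost (truncScore w π n) ≤
    2 * (n * P.levels) + ∑ i : Fin n,
      (2 * P.levels + (stateAt P w π i).collisionCost P i (π i) + (2 + 3 * P.rounds)) := by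
  have hloop := cost_loop_add_potential_le (O := truncScore w π n) (f := phase P)
    (a := ⟨fun _ => false, fun _ => ∅, fun _ => 0⟩) (fun s σ => 2 * σ.potential s)
    (c := fun s => if h : s < n then 2 * P.levels +
      (stateAt P w π s).collisionCost P s (π ⟨s, h⟩) + (2 + 3 * P.rounds) else 0) fun s hs => by
    rw [dif_pos hs]
    have := (phase_spec (i := ⟨s, hs⟩) (settled_stateAt (P := P) (w := w) (π := π) s hs.le)).2
    rwa [← stateAt_succ] at this
  have hpot : (stateAt P w π n).potential n ≤ n * P.levels := by
    refine (sum_le_card_nsmul _ _ _ fun j _ => (settled_stateAt n le_rfl).level_le j j.2).trans ?_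
    simp
  rw [sum_range] at hloop
  simp only [Fin.is_lt, dif_pos] at hloop
  exact ((Nat.le_add_right _ _).trans hloop).trans
    (Nat.add_le_add_right (Nat.mul_le_mul_left 2 hpot) _)

theorem finalizeAll_spec (hσ : σ.Settled P n w π) :
    (let σ' := (finalizeAll P σ).eval (truncScore w π n)
    σ'.Valid P n w π ∧ ∀ j, σ'.level j = P.levels) ∧
      (finalizeAll P σ).cost (truncScore w π n) ≤ ∑ e ∈ range P.levels, P.finalizeCost e := by
  have hloop := eval_loop_induction (O := truncScore w π n) (f := finalize P n)
    (fun e σ => σ.Settled P n w π ∧ ∀ j : Fin n, (j : ℕ) < n → e ≤ σ.level j)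
    ⟨hσ, fun _ _ => Nat.zero_le _⟩ fun e he τ hτ =>
      have h := finalize_spec hτ.1 le_rfl he hτ.2
      ⟨h.1, h.2.2⟩
  have hcost := cost_loop_add_potential_le (O := truncScore w π n) (f := finalize P n) (a := σ)
    (fun _ _ => 0) fun e he => by
      simpa only [Nat.zero_add, Nat.add_zero] using
        cost_finalize_le_finalizeCost (hloop e he.le).1 he (truncScore w π n)
  obtain ⟨hsettled, hlevel⟩ := hloop P.levels le_rfl
  exact ⟨⟨hsettled.toValid, fun j => (hsettled.level_le j j.2).antisymm (hlevel j j.2)⟩,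
    by simpa [finalizeAll] using hcost⟩

theorem eq_of_eval_solve_eq {w' : Fin n → Bool} {π' : Equiv.Perm (Fin n)}
    (h : (solve P).eval (truncScore w' π' n) = (solve P).eval (truncScore w π n)) :
    w' = w ∧ π' = π := by
  have hspec (w : Fin n → Bool) (π : Equiv.Perm (Fin n)) :=
    (finalizeAll_spec (settled_stateAt (P := P) (w := w) (π := π) n le_rfl)).1
  simp only [solve, eval_bind] at h
  obtain ⟨hvalid', -⟩ := hspec w' π'
  obtain ⟨hvalid, hlevel⟩ := hspec w π
  have hmem (j : Fin n) := hvalid'.mem j j.2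
  have hagree (j : Fin n) := hvalid'.agree j j.2
  simp only [stateAt, h] at hmem hagree
  have hπ : π' = π := Equiv.ext fun j => by
    obtain ⟨k, hk⟩ := π.surjective (π' j)
    have := hvalid.eq_of_mem_cand_of_level_eq j.2 (hlevel j) (hk ▸ hmem j)
    rw [← hk, this]
  refine ⟨funext fun j => ?_, hπ⟩
  rw [hagree j, hπ]
  exact (hvalid.agree j j.2).symm

theorem cost_solve_le : (solve P).cost (truncScore w π n) ≤
    n * (4 * P.levels + 2 + 3 * P.rounds) +
      ∑ i : Fin n, (stateAt P w π i).collisionCost P i (π i) +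
      ∑ e ∈ range P.levels, P.finalizeCost e := by
  have hlearn := cost_learn_le (P := P) (w := w) (π := π)
  have hfin := (finalizeAll_spec (settled_stateAt (P := P) (w := w) (π := π) n le_rfl)).2
  simp only [sum_add_distrib, sum_const, card_univ, Fintype.card_fin, smul_eq_mul] at hlearn
  rw [solve, cost_bind]
  refine (Nat.add_le_add hlearn hfin).trans_eq ?_
  ring

end Correctness

/-! ### Averaging over the secret permutation -/

theorem expect_mem_le (i : Fin n) (S : Equiv.Perm (Fin n) → Finset (Fin n)) {B : ℕ}
    (hcard : ∀ π, #(S π) ≤ B) (hS : ∀ π π', (∀ j < i, π j = π' j) → S π = S π') :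
    𝔼 π : Equiv.Perm (Fin n), (if π i ∈ S π then (1 : ℝ) else 0) ≤ B / (n - i) := by
  have hswap (k : Fin n) (hk : k ∈ Ici i) : (𝔼 π, if π k ∈ S π then (1 : ℝ) else 0) =
      𝔼 π, if π i ∈ S π then (1 : ℝ) else 0 := by
    refine Fintype.expect_equiv (Equiv.mulRight (Equiv.swap i k)) _ _ fun π => ?_
    have hSπ : S (π * Equiv.swap i k) = S π := hS _ _ fun j hj => congrArg π <|
      Equiv.swap_apply_of_ne_of_ne hj.ne (hj.trans_le (mem_Ici.mp hk)).ne
    simp [hSπ]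
  have hpos : (0 : ℝ) < n - i := sub_pos.mpr (Nat.cast_lt.mpr i.2)
  rw [le_div_iff₀' hpos]
  calc (n - i : ℝ) * 𝔼 π, (if π i ∈ S π then (1 : ℝ) else 0)
      = ∑ k ∈ Ici i, 𝔼 π, if π k ∈ S π then (1 : ℝ) else 0 := by
        rw [sum_congr rfl hswap, sum_const, Fin.card_Ici, nsmul_eq_mul, Nat.cast_sub i.2.le]
    _ = 𝔼 π, ∑ k ∈ Ici i, if π k ∈ S π then (1 : ℝ) else 0 := (expect_sum_comm _ _ _).symm
    _ ≤ B := expect_le univ_nonempty fun π _ => by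
        rw [sum_boole, Nat.cast_le]
        exact (card_le_card_of_injOn π (by simp [Set.MapsTo]) π.injective.injOn).trans (hcard π)

theorem sum_inv_sub_eq_harmonic (n : ℕ) : ∑ i : Fin n, (n - i : ℝ)⁻¹ = harmonic n := by
  rw [harmonic, ← Equiv.sum_comp Fin.revPerm, Rat.cast_sum, sum_range]
  refine sum_congr rfl fun i _ => ?_
  rw [Fin.revPerm_apply, Fin.val_rev, Nat.cast_sub (by lia)]
  push_cast
  ring

theorem harmonic_le_of_le_two_pow {n L : ℕ} (h : n ≤ 2 ^ L) : (harmonic n : ℝ) ≤ L + 1 := by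
  have hlog : Real.log n ≤ L := by
    obtain rfl | hn := n.eq_zero_or_pos
    · simp
    calc Real.log n ≤ Real.log (2 ^ L) :=
          Real.log_le_log (mod_cast hn) (mod_cast h)
      _ = L * Real.log 2 := by rw [Real.log_pow]
      _ ≤ L := mul_le_of_le_one_right L.cast_nonneg
          (Real.log_two_lt_d9.le.trans (by norm_num))
  linarith [harmonic_le_one_add_log n]

namespace Schedule

variable (P : Schedule n)

/-- A bound for the number of candidates that are not isolated at the levels from `e` on. -/
def crowd (e : ℕ) : ℕ :=
  ∑ f ∈ Ico e P.levels, 2 ^ P.splitExp f * 2 ^ P.sizeExp f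

/-- A bound for `n - i` times the expected cost of the collisions of the step `i`. -/
def collisionWeight : ℕ :=
  ∑ e ∈ range P.levels, P.finalizeCost e * P.crowd e

end Schedule

section Expectation

variable (P : Schedule n) (w)

theorem expect_collisionCost_le (i : Fin n) :
    𝔼 π, ((stateAt P w π i).collisionCost P i (π i) : ℝ) ≤
      P.collisionWeight * (n - i : ℝ)⁻¹ := by
  have hmem (e : ℕ) : (𝔼 π, if π i ∈ (stateAt P w π i).collisionSet P i e then (1 : ℝ) else 0) ≤
      P.crowd e / (n - i) :=
    expect_mem_le i _ (fun π => (settled_stateAt i i.2.le).card_collisionSet_le e)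
      fun π π' h => by rw [stateAt_congr i.2.le h]
  calc 𝔼 π, ((stateAt P w π i).collisionCost P i (π i) : ℝ)
      = ∑ e ∈ range P.levels, P.finalizeCost e *
          𝔼 π, if π i ∈ (stateAt P w π i).collisionSet P i e then (1 : ℝ) else 0 := by
        simp only [State.collisionCost, Nat.cast_sum, expect_sum_comm, mul_expect, mul_ite,
          mul_one, mul_zero, Nat.cast_ite, Nat.cast_zero]
    _ ≤ ∑ e ∈ range P.levels, P.finalizeCost e * (P.crowd e / (n - i) : ℝ) := by
        gcongr with e
        exact hmem e
    _ = P.collisionWeight * (n - i : ℝ)⁻¹ := by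
        simp only [Schedule.collisionWeight, Nat.cast_sum, Nat.cast_mul, sum_mul, div_eq_mul_inv,
          mul_assoc]

theorem expect_cost_solve_le : 𝔼 π, ((solve P).cost (truncScore w π n) : ℝ) ≤
    n * (4 * P.levels + 2 + 3 * P.rounds) + P.collisionWeight * harmonic n +
      ∑ e ∈ range P.levels, P.finalizeCost e := by
  calc 𝔼 π, ((solve P).cost (truncScore w π n) : ℝ)
      ≤ 𝔼 π, (n * (4 * P.levels + 2 + 3 * P.rounds) +
          ∑ i : Fin n, ((stateAt P w π i).collisionCost P i (π i) : ℝ) +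
          ∑ e ∈ range P.levels, P.finalizeCost e) :=
        expect_le_expect fun π _ => mod_cast cost_solve_le (P := P) (w := w) (π := π)
    _ = n * (4 * P.levels + 2 + 3 * P.rounds) +
          ∑ i : Fin n, 𝔼 π, ((stateAt P w π i).collisionCost P i (π i) : ℝ) +
          ∑ e ∈ range P.levels, P.finalizeCost e := by
        simp only [expect_add_distrib, expect_sum_comm, Fintype.expect_const]
    _ ≤ _ := by
        rw [← sum_inv_sub_eq_harmonic, mul_sum]
        gcongr with i
        exact expect_collisionCost_le w P i

end Expectation

/-! ### Choice of the parameters -/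

/-- The amounts by which the binary logarithm of the number of candidates falls short of that at
the outset, level by level. -/
def deficit : ℕ → ℕ
  | 0 => 2
  | e + 1 => deficit e + deficit e / 2

theorem monotone_deficit : Monotone deficit :=
  monotone_nat_of_le_succ fun _ => Nat.le_add_right _ _

theorem two_pow_succ_le_deficit (k : ℕ) : 2 ^ (k + 1) ≤ deficit (2 * k) := by
  induction k with
  | zero => exact le_rfl
  | succ k ih =>
    have hk : deficit (2 * (k + 1)) = deficit (2 * k) + deficit (2 * k) / 2 +
      (deficit (2 * k) + deficit (2 * k) / 2) / 2 := rfl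
    have := Nat.one_le_two_pow (n := k)
    rw [pow_succ] at ih ⊢
    rw [pow_succ]
    lia

namespace Schedule

section Weight

variable {P : Schedule n} {H : ℕ} (hmono : Monotone P.splitExp)
  (hH : ∀ e, 2 * P.splitExp e + P.sizeExp e ≤ H)

include hmono hH

theorem finalizeCost_mul_le {e f : ℕ} (hef : e ≤ f) :
    P.finalizeCost e * (2 ^ P.splitExp f * 2 ^ P.sizeExp f) ≤ 3 * H * 2 ^ H := by
  have hsplit : 2 ^ P.splitExp e ≤ 2 ^ P.splitExp f := Nat.pow_le_pow_right two_pos (hmono hef)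
  have hone : 1 ≤ 2 ^ P.splitExp f := Nat.one_le_two_pow
  calc P.sizeExp e * (2 + 2 ^ P.splitExp e) * (2 ^ P.splitExp f * 2 ^ P.sizeExp f)
      ≤ H * (3 * 2 ^ P.splitExp f) * (2 ^ P.splitExp f * 2 ^ P.sizeExp f) := by
        gcongr
        · exact (Nat.le_add_left _ _).trans (hH e)
        · lia
    _ = 3 * H * 2 ^ (2 * P.splitExp f + P.sizeExp f) := by ring
    _ ≤ 3 * H * 2 ^ H := Nat.mul_le_mul_left _ (Nat.pow_le_pow_right two_pos (hH f))

theorem collisionWeight_le :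
    P.collisionWeight ≤ P.levels * (P.levels * (3 * H * 2 ^ H)) := by
  refine (sum_le_card_nsmul _ _ (P.levels * (3 * H * 2 ^ H)) fun e _ => ?_).trans_eq (by simp)
  rw [crowd, mul_sum]
  refine (sum_le_card_nsmul _ _ _ fun f hf =>
    finalizeCost_mul_le hmono hH (mem_Ico.mp hf).1).trans ?_
  rw [Nat.card_Ico, smul_eq_mul]
  exact Nat.mul_le_mul_right _ (Nat.sub_le _ _)

theorem sum_finalizeCost_le :
    ∑ e ∈ range P.levels, P.finalizeCost e ≤ P.levels * (3 * H * 2 ^ H) := by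
  refine (sum_le_card_nsmul _ _ (3 * H * 2 ^ H) fun e _ => ?_).trans_eq (by simp)
  exact (Nat.le_mul_of_pos_right _ (by positivity)).trans (finalizeCost_mul_le hmono hH le_rfl)

end Weight

/-- The binary logarithm of the number of candidates before the first deficit is subtracted. With
`H = log n - 4 log log n`, collisions are so rare that they cost `O(n)` in total. -/
def logLogSize (n : ℕ) : ℕ :=
  Nat.clog 2 n - 4 * Nat.clog 2 (Nat.clog 2 n + 1)

/-- The schedule with `O(log log n)` levels and halvings. -/
def logLog (n : ℕ) : Schedule n where
  levels := 2 * Nat.clog 2 (Nat.clog 2 n + 1)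
  sizeExp e := logLogSize n - deficit e
  splitExp e := min (deficit e) (logLogSize n) / 2
  rounds := 4 * Nat.clog 2 (Nat.clog 2 n + 1) + 2
  sizeExp_le e := by simp only [deficit]; lia
  sizeExp_levels := by
    have hle : Nat.clog 2 n + 1 ≤ 2 ^ Nat.clog 2 (Nat.clog 2 n + 1) :=
      Nat.le_pow_clog one_lt_two _
    have hdeficit := two_pow_succ_le_deficit (Nat.clog 2 (Nat.clog 2 n + 1))
    rw [pow_succ] at hdeficit
    rw [logLogSize]
    lia
  le_two_pow := (Nat.le_pow_clog one_lt_two n).trans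
    (Nat.pow_le_pow_right two_pos (by simp only [logLogSize, deficit]; lia))

theorem monotone_splitExp_logLog : Monotone (logLog n).splitExp := fun _ _ h =>
  Nat.div_le_div_right (min_le_min_right _ (monotone_deficit h))

theorem two_mul_splitExp_add_sizeExp_logLog_le (e : ℕ) :
    2 * (logLog n).splitExp e + (logLog n).sizeExp e ≤ logLogSize n := by
  simp only [logLog]
  lia

end Schedule

theorem pow_clog_le_mul {b m : ℕ} (hb : 1 < b) (hm : 0 < m) : b ^ Nat.clog b m ≤ b * m := by
  obtain hle | hlt := le_or_gt m 1
  · rw [Nat.clog_of_right_le_one hle, pow_zero]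
    exact Nat.mul_pos (zero_lt_one.trans hb) hm
  · rw [← Nat.succ_pred_eq_of_pos (Nat.clog_pos hb hlt), pow_succ']
    exact Nat.mul_le_mul_left b (Nat.pow_pred_clog_lt_self hb hlt).le

theorem pow_four_le_two_pow (m : ℕ) : m ^ 4 ≤ 256 * 2 ^ m :=
  calc m ^ 4 ≤ (4 * 2 ^ (m / 4)) ^ 4 :=
        Nat.pow_le_pow_left (by have := (m / 4).lt_two_pow_self; lia) 4
    _ = 256 * 2 ^ (m / 4 * 4) := by rw [mul_pow, ← pow_mul]; rfl
    _ ≤ 256 * 2 ^ m := by gcongr <;> lia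

theorem clog_pow_four_mul_two_pow_le (hn : 0 < n) :
    (Nat.clog 2 n + 1) ^ 4 * 2 ^ Schedule.logLogSize n ≤ 1024 * n := by
  rw [Schedule.logLogSize]
  have hL : 2 ^ Nat.clog 2 n ≤ 2 * n := pow_clog_le_mul one_lt_two hn
  set L := Nat.clog 2 n
  have hl : L + 1 ≤ 2 ^ Nat.clog 2 (L + 1) := Nat.le_pow_clog one_lt_two _
  set l := Nat.clog 2 (L + 1)
  obtain hle | hlt := le_or_gt (4 * l) L
  · calc (L + 1) ^ 4 * 2 ^ (L - 4 * l) ≤ (2 ^ l) ^ 4 * 2 ^ (L - 4 * l) := by gcongr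
      _ = 2 ^ L := by rw [← pow_mul, ← pow_add]; congr 1; lia
      _ ≤ 1024 * n := by lia
  · calc (L + 1) ^ 4 * 2 ^ (L - 4 * l) = (L + 1) ^ 4 := by
          rw [Nat.sub_eq_zero_of_le hlt.le, pow_zero, mul_one]
      _ ≤ 256 * 2 ^ (L + 1) := pow_four_le_two_pow _
      _ ≤ 1024 * n := by rw [pow_succ]; lia

theorem collision_bound_le {H k m : ℕ} (hH : H ≤ m) (hk : k ≤ m) (hm : 0 < m) :
    2 * k * (2 * k * (3 * H * 2 ^ H)) * m + 2 * k * (3 * H * 2 ^ H) ≤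
      18 * (m ^ 4 * 2 ^ H) :=
  calc 2 * k * (2 * k * (3 * H * 2 ^ H)) * m + 2 * k * (3 * H * 2 ^ H)
      ≤ 2 * m * (2 * m * (3 * m * 2 ^ H)) * m + 2 * m * (3 * m * 2 ^ H) * m ^ 2 := by
        refine Nat.add_le_add (by gcongr) ((Nat.le_mul_of_pos_right _ (by positivity)).trans' ?_)
        gcongr
    _ = 18 * (m ^ 4 * 2 ^ H) := by ring

theorem expect_cost_solve_logLog_le (hn : 2 ≤ n) (w : Fin n → Bool) :
    𝔼 π, ((solve (Schedule.logLog n)).cost (truncScore w π n) : ℝ) ≤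
      18460 * n * Nat.clog 2 (Nat.clog 2 n + 1) := by
  set L := Nat.clog 2 n
  set l := Nat.clog 2 (L + 1)
  have hl_pos : 1 ≤ l :=
    Nat.clog_pos one_lt_two (Nat.succ_lt_succ (Nat.clog_pos one_lt_two hn))
  have hl_le : l ≤ L + 1 := Nat.clog_le_of_le_pow Nat.lt_two_pow_self.le
  set B := 3 * Schedule.logLogSize n * 2 ^ Schedule.logLogSize n
  have hweight : (Schedule.logLog n).collisionWeight ≤ 2 * l * (2 * l * B) :=
    Schedule.collisionWeight_le Schedule.monotone_splitExp_logLog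
      Schedule.two_mul_splitExp_add_sizeExp_logLog_le
  have hfinalize : ∑ e ∈ range (2 * l), (Schedule.logLog n).finalizeCost e ≤ 2 * l * B :=
    Schedule.sum_finalizeCost_le Schedule.monotone_splitExp_logLog
      Schedule.two_mul_splitExp_add_sizeExp_logLog_le
  have hsmall : 2 * l * (2 * l * B) * (L + 1) + 2 * l * B ≤ 18432 * n :=
    (collision_bound_le (by rw [Schedule.logLogSize]; lia) hl_le L.succ_pos).trans
      ((Nat.mul_le_mul_left 18 (clog_pow_four_mul_two_pow_le (by lia))).trans_eq (by ring))
  have hnl : n ≤ n * l := Nat.le_mul_of_pos_right n hl_pos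
  calc 𝔼 π, ((solve (Schedule.logLog n)).cost (truncScore w π n) : ℝ)
      ≤ n * (4 * (2 * l : ℕ) + 2 + 3 * (4 * l + 2 : ℕ)) +
          (Schedule.logLog n).collisionWeight * harmonic n +
          (∑ e ∈ range (2 * l), (Schedule.logLog n).finalizeCost e : ℕ) :=
        mod_cast expect_cost_solve_le w (Schedule.logLog n)
    _ ≤ n * (4 * (2 * l : ℕ) + 2 + 3 * (4 * l + 2 : ℕ)) +
          (2 * l * (2 * l * B) : ℕ) * (L + 1) + (2 * l * B : ℕ) := by
        have hpos : (0 : ℝ) ≤ harmonic n := mod_cast (harmonic_pos (by lia)).le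
        have hharmonic := harmonic_le_of_le_two_pow (Nat.le_pow_clog one_lt_two n)
        gcongr
    _ = (20 * (n * l) + 8 * n + (2 * l * (2 * l * B) * (L + 1) + 2 * l * B) : ℕ) := by
        push_cast
        ring
    _ ≤ (18460 * (n * l) : ℕ) := Nat.cast_le.mpr (by lia)
    _ = 18460 * n * l := by
        push_cast
        ring

theorem natClog_le_logb_add_one (b : ℕ) {m : ℕ} (hb : 1 < b) (hm : 0 < m) :
    (Nat.clog b m : ℝ) ≤ Real.logb b m + 1 := by
  rw [← Real.natCeil_logb_natCast]
  exact (Nat.ceil_lt_add_one (Real.logb_nonneg (mod_cast hb) (mod_cast hm))).le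

theorem clog_clog_add_one_le (hn : 4 ≤ n) :
    (Nat.clog 2 (Nat.clog 2 n + 1) : ℝ) ≤ 3 * Real.logb 2 (Real.logb 2 n) := by
  have hlog : 2 ≤ Real.logb 2 n := by
    rw [Real.le_logb_iff_rpow_le one_lt_two (by positivity)]
    norm_num
    exact_mod_cast hn
  have hloglog : 1 ≤ Real.logb 2 (Real.logb 2 n) := by
    rwa [Real.le_logb_iff_rpow_le one_lt_two (by positivity), Real.rpow_one]
  have hclog : (Nat.clog 2 n : ℝ) ≤ Real.logb 2 n + 1 :=
    natClog_le_logb_add_one 2 one_lt_two (by lia)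
  calc (Nat.clog 2 (Nat.clog 2 n + 1) : ℝ)
      ≤ Real.logb 2 (Nat.clog 2 n + 1 : ℕ) + 1 :=
        natClog_le_logb_add_one 2 one_lt_two (Nat.succ_pos _)
    _ ≤ Real.logb 2 (2 * Real.logb 2 n) + 1 := by
        have hle : ((Nat.clog 2 n + 1 : ℕ) : ℝ) ≤ 2 * Real.logb 2 n := by push_cast; linarith
        gcongr
        exact one_lt_two
    _ = Real.logb 2 (Real.logb 2 n) + 2 := by
        rw [Real.logb_mul two_ne_zero (by positivity), Real.logb_self_eq_one one_lt_two]
        ring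
    _ ≤ 3 * Real.logb 2 (Real.logb 2 n) := by linarith

/-! ### The randomized strategy -/

theorem tsum_map_mul {α β : Type*} (p : PMF α) (f : α → β) (T : β → ℝ≥0∞) :
    ∑' b, p.map f b * T b = ∑' a, p a * T (f a) := by
  classical
  simp only [PMF.map_apply, ← ENNReal.tsum_mul_right]
  rw [ENNReal.tsum_comm]
  refine tsum_congr fun a => (tsum_eq_single (f a) fun b hb => ?_).trans (by simp)
  rw [if_neg hb, zero_mul]

/-- The strategy that plays the tree `p` with the positions relabelled by `σ`. -/
def relabelled {α : Type} (p : Program n α) (σ : Equiv.Perm (Fin n)) : List ℕ → Fin n → Bool :=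
  (p.translate (· ∘ σ) id).strategy

/-- Plays a tree with the positions relabelled by a uniformly random `σ`, which makes the
permutation `σ * π` that the tree has to find uniformly random. -/
noncomputable def randomlyRelabelled {α : Type} (p : Program n α) :
    PMF (List ℕ → Fin n → Bool) :=
  (PMF.uniformOfFintype (Equiv.Perm (Fin n))).map (relabelled p)

theorem finite_support_randomlyRelabelled {α : Type} (p : Program n α) :
    (randomlyRelabelled p).support.Finite := by
  rw [randomlyRelabelled, PMF.support_map]
  exact Set.toFinite _

theorem timeToIdentify_relabelled_le {α : Type} {p : Program n α}
    (hp : ∀ {w w' π π'}, p.eval (truncScore w' π' n) = p.eval (truncScore w π n) →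
      w' = w ∧ π' = π) (z : Fin n → Bool) (π σ : Equiv.Perm (Fin n)) :
    timeToIdentify n (relabelled p σ) z π ≤ p.cost (truncScore (z ∘ π) (σ * π) n) := by
  refine (QueryTree.timeToIdentify_strategy_le _ fun z' π' h => ?_).trans_eq ?_
  · simp only [QueryTree.eval_translate, id, score_comp_perm] at h
    obtain ⟨hz, hπ⟩ := hp h
    obtain rfl := mul_left_cancel hπ
    exact ⟨π'.surjective.injective_comp_right hz, rfl⟩
  · simp only [QueryTree.cost_translate, id, score_comp_perm]

theorem tsum_randomlyRelabelled_mul_timeToIdentify_le {α : Type} {p : Program n α}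
    (hp : ∀ {w w' π π'}, p.eval (truncScore w' π' n) = p.eval (truncScore w π n) →
      w' = w ∧ π' = π) (z : Fin n → Bool) (π : Equiv.Perm (Fin n)) :
    ∑' g, randomlyRelabelled p g * (timeToIdentify n g z π : ℝ≥0∞) ≤
      ENNReal.ofReal (𝔼 π', (p.cost (truncScore (z ∘ π) π' n) : ℝ)) := by
  set N := Fintype.card (Equiv.Perm (Fin n))
  have hN0 : (0 : ℝ) < N := Nat.cast_pos.mpr Fintype.card_pos
  rw [randomlyRelabelled, tsum_map_mul, tsum_fintype]
  simp only [PMF.uniformOfFintype_apply]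
  calc ∑ σ, (N : ℝ≥0∞)⁻¹ * (timeToIdentify n (relabelled p σ) z π : ℝ≥0∞)
      ≤ ∑ σ, (N : ℝ≥0∞)⁻¹ * (p.cost (truncScore (z ∘ π) (σ * π) n) : ℝ≥0∞) := by
        gcongr with σ
        exact mod_cast ENat.toENNReal_le.mpr (timeToIdentify_relabelled_le hp z π σ)
    _ = ∑ π', (N : ℝ≥0∞)⁻¹ * (p.cost (truncScore (z ∘ π) π' n) : ℝ≥0∞) :=
        Equiv.sum_comp (Equiv.mulRight π) fun π' =>
          (N : ℝ≥0∞)⁻¹ * (p.cost (truncScore (z ∘ π) π' n) : ℝ≥0∞)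
    _ = ENNReal.ofReal (𝔼 π', (p.cost (truncScore (z ∘ π) π' n) : ℝ)) := by
        rw [Fintype.expect_eq_sum_div_card, ENNReal.ofReal_div_of_pos hN0,
          ENNReal.ofReal_natCast, ← Nat.cast_sum, ENNReal.ofReal_natCast, Nat.cast_sum,
          div_eq_mul_inv, sum_mul]
        simp only [mul_comm]

end HiddenPermutation

/-- The randomized query complexity of the HiddenPermutation problem is `O(n log log n)`. -/
theorem randomized_upper_bound :
    ∃ C : ℝ, 0 < C ∧ ∀ n : ℕ, 4 ≤ n →
      ∃ D : PMF (List ℕ → Fin n → Bool), D.support.Finite ∧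
        ∀ (z : Fin n → Bool) (π : Equiv.Perm (Fin n)),
          ∑' g, D g * (timeToIdentify n g z π : ℝ≥0∞) ≤
            ENNReal.ofReal (C * n * Real.logb 2 (Real.logb 2 n)) := by
  refine ⟨18460 * 3, by norm_num, fun n hn =>
    ⟨HiddenPermutation.randomlyRelabelled (HiddenPermutation.solve (.logLog n)),
      HiddenPermutation.finite_support_randomlyRelabelled _, fun z π => ?_⟩⟩
  refine (HiddenPermutation.tsum_randomlyRelabelled_mul_timeToIdentify_le
    HiddenPermutation.eq_of_eval_solve_eq z π).trans (ENNReal.ofReal_le_ofReal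
      ((HiddenPermutation.expect_cost_solve_logLog_le (by lia) _).trans ?_))
  calc 18460 * n * (Nat.clog 2 (Nat.clog 2 n + 1) : ℝ)
      ≤ 18460 * n * (3 * Real.logb 2 (Real.logb 2 n)) := by
        gcongr
        exact HiddenPermutation.clog_clog_add_one_le hn
    _ = 18460 * 3 * n * Real.logb 2 (Real.logb 2 n) := by ring
end

section
/- There is a constant c > 0 such that for all sufficiently large n, for every probability distribution D over deterministic strategies for the HiddenPermutation problem with n positions, there exists a secret (z,π) ∈ {0,1}^n × S_n such that the expectation over g ∼ D of T(g,z,π) is at least c·n·log₂ log₂ n. -/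
open scoped ENNReal

/-!
By Yao's principle it suffices to bound the average time of a deterministic strategy over the
secrets that read a fixed alternating pattern in a uniformly random order `σ`.

Given the scores so far and the earlier entries of `σ`, the entry `σ i` is uniform on a candidate
set `U i`. Position `i` is hard if the first query to reach it guesses it wrongly, and a hard
position carries the potential `log (1 + log (n / #(U i)))`. A query that reaches a hard position
splits its candidates in two, and the double logarithm is chosen so that the expected growth of the
potential is at most `2` times the probability of failing at that position plus `#(U i) / n`. The
candidate sets of hard positions with the same bit are disjoint, because the first query to reach
the later one treats the two differently. Hence a query raises the total potential by at most `4`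
in expectation, apart from a contribution of `2` when a position is first reached.

Once the secret is identified, all candidate sets are singletons and every hard position has
potential `log (1 + log n)`. Exchanging two consecutive entries of `σ` shows that a constant
fraction of the positions is hard, so `Ω(n log log n)` queries were necessary.
-/

namespace HiddenPermutation

open Finset Filter

/-! ### Averaging -/

theorem sum_eq_sum_inv_card_mul_sum {α K : Type*} [Fintype α] [DivisionRing K] [CharZero K]
    (B : α → Finset α) (hB : ∀ a, (B a).Nonempty) (hsymm : ∀ a, ∀ a' ∈ B a, a ∈ B a')
    (hcard : ∀ a, ∀ a' ∈ B a, #(B a') = #(B a)) (f : α → K) :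
    ∑ a, f a = ∑ a, (#(B a) : K)⁻¹ * ∑ a' ∈ B a, f a' := by
  calc ∑ a, f a = ∑ a, ∑ _a' ∈ B a, (#(B a) : K)⁻¹ * f a := by
        refine sum_congr rfl fun a _ => ?_
        have hne : (#(B a) : K) ≠ 0 := Nat.cast_ne_zero.2 (hB a).card_ne_zero
        rw [sum_const, nsmul_eq_mul, mul_inv_cancel_left₀ hne]
    _ = ∑ a', ∑ a ∈ B a', (#(B a) : K)⁻¹ * f a :=
        sum_comm' fun a a' => by simpa using ⟨hsymm a a', hsymm a' a⟩
    _ = ∑ a, (#(B a) : K)⁻¹ * ∑ a' ∈ B a, f a' := by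
        refine sum_congr rfl fun a _ => ?_
        rw [mul_sum]
        exact sum_congr rfl fun a' ha' => by rw [hcard a a' ha']

theorem yao_principle {γ ι : Type*} [Fintype ι] [Nonempty ι] (D : PMF γ) (cost : γ → ι → ℝ≥0∞)
    (B : ℝ≥0∞) (h : ∀ g, Fintype.card ι * B ≤ ∑ i, cost g i) :
    ∃ i, B ≤ ∑' g, D g * cost g i := by
  by_contra! hlt
  have hsum : ∑ i, ∑' g, D g * cost g i < Fintype.card ι * B := by
    simpa using ENNReal.sum_lt_sum_of_nonempty univ_nonempty fun i _ => hlt i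
  refine hsum.not_ge ?_
  calc (Fintype.card ι : ℝ≥0∞) * B = ∑' g, D g * (Fintype.card ι * B) := by
        rw [ENNReal.tsum_mul_right, D.tsum_coe, one_mul]
    _ ≤ ∑' g, D g * ∑ i, cost g i := by gcongr with g; exact h g
    _ = ∑ i, ∑' g, D g * cost g i := by
        simp_rw [mul_sum]
        exact Summable.tsum_finsetSum fun _ _ => ENNReal.summable

theorem sum_bool_comp {α R : Type*} [NonAssocSemiring R] (V : Finset α) (x : α → Bool) (c : Bool)
    (F : Bool → R) :
    ∑ u ∈ V, F (x u) = #{u ∈ V | x u = c} * F c + #{u ∈ V | x u = !c} * F (!c) := by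
  have hfiber (d : Bool) : ∑ u ∈ V with x u = d, F (x u) = #{u ∈ V | x u = d} * F d := by
    rw [← nsmul_eq_mul, ← sum_const]
    exact sum_congr rfl fun u hu => by rw [(mem_filter.1 hu).2]
  rw [← sum_fiberwise V x, Fintype.sum_bool, hfiber, hfiber]
  cases c
  · exact add_comm _ _
  · rfl

theorem card_bool_fiber_add_card_bool_fiber {α : Type*} (V : Finset α) (x : α → Bool) (c : Bool) :
    #{u ∈ V | x u = c} + #{u ∈ V | x u = !c} = #V := by
  simpa using (sum_bool_comp V x c (1 : Bool → ℕ)).symm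

/-! ### The doubly logarithmic weight -/

/-- The weight `log (1 + log x)` of a position whose candidate set has been narrowed by a
factor `x`; the shift by `1` makes it vanish at `x = 1`. -/
noncomputable def logLog (x : ℝ) : ℝ := Real.log (1 + Real.log x)

theorem logLog_nonneg {x : ℝ} (hx : 1 ≤ x) : 0 ≤ logLog x :=
  Real.log_nonneg (by linarith [Real.log_nonneg hx])

theorem logLog_le_self {x : ℝ} (hx : 1 ≤ x) : logLog x ≤ x := by
  have hlog := Real.log_nonneg hx
  calc logLog x ≤ Real.log x := by
        simpa [logLog] using Real.log_le_sub_one_of_pos (x := 1 + Real.log x) (by linarith)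
    _ ≤ x := Real.log_le_self (by linarith)

theorem log_log_le_logLog {x : ℝ} (hx : 1 < x) : Real.log (Real.log x) ≤ logLog x :=
  Real.log_le_log (Real.log_pos hx) (by linarith)

theorem logLog_mul_sub_le {x y : ℝ} (hx : 1 ≤ x) (hy : 1 ≤ y) :
    logLog (x * y) - logLog x ≤ Real.log y / (1 + Real.log x) := by
  have hlx := Real.log_nonneg hx
  have hly := Real.log_nonneg hy
  rw [logLog, logLog, Real.log_mul (by positivity) (by positivity),
    ← Real.log_div (by positivity) (by positivity)]
  refine (Real.log_le_sub_one_of_pos (by positivity)).trans_eq ?_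
  field_simp
  ring

theorem logLog_mul_sub_le_sub_one {x y : ℝ} (hx : 1 ≤ x) (hy : 1 ≤ y) :
    logLog (x * y) - logLog x ≤ y - 1 :=
  calc logLog (x * y) - logLog x ≤ Real.log y / (1 + Real.log x) := logLog_mul_sub_le hx hy
    _ ≤ Real.log y := div_le_self (Real.log_nonneg hy) (by linarith [Real.log_nonneg hx])
    _ ≤ y - 1 := Real.log_le_sub_one_of_pos (by linarith)

theorem logLog_mul_sub_le_one_add_div {x y : ℝ} (hx : 1 ≤ x) (hy : 1 ≤ y) :
    logLog (x * y) - logLog x ≤ 1 + y / x := by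
  have hlx := Real.log_nonneg hx
  have hyx : 0 < y / x := by positivity
  have hlog : Real.log y ≤ Real.log x + y / x :=
    calc Real.log y = Real.log x + Real.log (y / x) := by
          rw [Real.log_div (by positivity) (by positivity), add_sub_cancel]
      _ ≤ Real.log x + y / x := by gcongr; exact Real.log_le_self hyx.le
  refine (logLog_mul_sub_le hx hy).trans ((div_le_iff₀ (by positivity)).2 ?_)
  linarith [mul_nonneg hyx.le hlx]

theorem mul_logLog_div_le {n d : ℝ} (hd : 0 ≤ d) (hdn : d ≤ n) : d * logLog (n / d) ≤ n := by
  rcases hd.eq_or_lt with rfl | hd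
  · simpa using hdn
  calc d * logLog (n / d) ≤ d * (n / d) := by
        gcongr; exact logLog_le_self ((one_le_div hd).2 hdn)
    _ = n := by field_simp

/-- Of `a + d` candidates, `a` are consistent with a correct guess and `d` with a wrong one. -/
theorem mul_logLog_div_add_mul_logLog_div_le {n a d : ℝ} (ha : 0 ≤ a) (hd : 0 ≤ d)
    (hm : 0 < a + d) (hn : a + d ≤ n) :
    a * (logLog (n / a) - logLog (n / (a + d))) + d * (logLog (n / d) - logLog (n / (a + d))) ≤
      2 * d + (a + d) * ((a + d) / n) := by
  have hn0 : 0 < n := hm.trans_le hn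
  have hx : 1 ≤ n / (a + d) := (one_le_div hm).2 hn
  have hsurvive : a * (logLog (n / a) - logLog (n / (a + d))) ≤ d := by
    rcases ha.eq_or_lt with rfl | ha
    · simpa using hd
    have h := logLog_mul_sub_le_sub_one hx ((one_le_div ha).2 (by linarith : a ≤ a + d))
    rw [div_mul_div_cancel₀ hm.ne'] at h
    calc a * (logLog (n / a) - logLog (n / (a + d))) ≤ a * ((a + d) / a - 1) := by gcongr
      _ = d := by field_simp; ring
  have hfail : d * (logLog (n / d) - logLog (n / (a + d))) ≤ d + (a + d) * ((a + d) / n) := by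
    rcases hd.eq_or_lt with rfl | hd
    · simp only [zero_mul, zero_add]; positivity
    have h := logLog_mul_sub_le_one_add_div hx ((one_le_div hd).2 (by linarith : d ≤ a + d))
    rw [div_mul_div_cancel₀ hm.ne'] at h
    calc d * (logLog (n / d) - logLog (n / (a + d)))
        ≤ d * (1 + (a + d) / d / (n / (a + d))) := by gcongr
      _ = d + (a + d) * ((a + d) / n) := by field_simp
  linarith

theorem sum_logLog_card_fiber_le {α : Type*} {n : ℕ} {V : Finset α} (hV : V.Nonempty)
    (hn : #V ≤ n) (x : α → Bool) (c : Bool) :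
    ∑ u ∈ V, logLog (n / #{v ∈ V | x v = x u}) ≤
      ∑ u ∈ V, (logLog (n / #V) + ((if x u = c then 0 else 2) + #V / n)) := by
  have hsplit : (#{u ∈ V | x u = c} : ℝ) + #{u ∈ V | x u = !c} = #V := by
    exact_mod_cast card_bool_fiber_add_card_bool_fiber V x c
  have hpos : (0 : ℝ) < #V := by exact_mod_cast hV.card_pos
  have key := mul_logLog_div_add_mul_logLog_div_le (n := n) (Nat.cast_nonneg #{u ∈ V | x u = c})
    (Nat.cast_nonneg #{u ∈ V | x u = !c}) (by rwa [hsplit]) (by rw [hsplit]; exact_mod_cast hn)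
  rw [sum_bool_comp V x c fun e => logLog (n / #{v ∈ V | x v = e}),
    sum_bool_comp V x c fun e => logLog (n / #V) + ((if e = c then 0 else 2) + (#V : ℝ) / n)]
  simp only [if_true, Bool.not_eq_self, if_false, ← hsplit]
  linarith

theorem sum_ite_logLog_card_fiber_le {α : Type*} {n : ℕ} {V : Finset α} (hn : #V ≤ n)
    (x : α → Bool) (c : Bool) :
    ∑ u ∈ V, (if x u = c then 0 else logLog (n / #{v ∈ V | x v = x u})) ≤ n := by
  rw [sum_bool_comp V x c fun e => if e = c then 0 else logLog (n / #{v ∈ V | x v = e})]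
  simp only [if_true, Bool.not_eq_self, if_false, mul_zero, zero_add]
  exact mul_logLog_div_le (Nat.cast_nonneg _) (by exact_mod_cast (card_filter_le _ _).trans hn)

/-- The left-hand side is the target bound, the right-hand side what the potential argument gives
when `n / 2` positions are used. -/
theorem eventually_mul_logb_logb_le : ∀ᶠ n : ℕ in atTop,
    1 / 288 * n * Real.logb 2 (Real.logb 2 n) ≤ (n / 2 : ℕ) * (logLog n / 12 - 1) := by
  have hll : Tendsto (fun n : ℕ => Real.log (Real.log n)) atTop atTop :=
    Real.tendsto_log_atTop.comp (Real.tendsto_log_atTop.comp tendsto_natCast_atTop_atTop)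
  filter_upwards [hll.eventually_ge_atTop 24, eventually_ge_atTop 2,
    (Real.tendsto_log_atTop.comp tendsto_natCast_atTop_atTop).eventually_ge_atTop 1]
    with n h24 hn2 hlog
  have hlogb {x : ℝ} (hx : 1 ≤ x) : Real.logb 2 x ≤ 2 * Real.log x := by
    rw [Real.logb, div_le_iff₀ (Real.log_pos one_lt_two)]
    nlinarith [Real.log_nonneg hx, Real.log_two_gt_d9]
  have hn1 : (1 : ℝ) < n := by exact_mod_cast hn2
  replace hlog : 1 ≤ Real.log n := hlog
  have hlogb_pos : 0 < Real.logb 2 n := Real.logb_pos one_lt_two hn1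
  have hbound : Real.logb 2 (Real.logb 2 n) ≤ 3 * logLog n :=
    calc Real.logb 2 (Real.logb 2 n) ≤ Real.logb 2 (2 * Real.log n) :=
          Real.logb_le_logb_of_le one_lt_two hlogb_pos (hlogb hn1.le)
      _ = 1 + Real.logb 2 (Real.log n) := by
          rw [Real.logb_mul two_ne_zero (by positivity), Real.logb_self_eq_one one_lt_two]
      _ ≤ 1 + 2 * Real.log (Real.log n) := by gcongr; exact hlogb hlog
      _ ≤ 3 * Real.log (Real.log n) := by linarith
      _ ≤ 3 * logLog n := by gcongr; exact log_log_le_logLog hn1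
  have hhalf : (n : ℝ) / 4 ≤ (n / 2 : ℕ) := by
    have : (n : ℝ) ≤ 4 * (n / 2 : ℕ) := by exact_mod_cast (by omega : n ≤ 4 * (n / 2))
    linarith
  have h24' : 24 ≤ logLog n := h24.trans (log_log_le_logLog hn1)
  calc 1 / 288 * n * Real.logb 2 (Real.logb 2 n) ≤ 1 / 288 * n * (3 * logLog n) := by gcongr
    _ = n / 4 * (logLog n / 24) := by ring
    _ ≤ (n / 2 : ℕ) * (logLog n / 12 - 1) := by gcongr; linarith

/-! ### Scores and histories -/

section Score

variable {n : ℕ} {z z' x : Fin n → Bool} {π π' : Equiv.Perm (Fin n)}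

theorem score_le : score n z π x ≤ n := Nat.findGreatest_le n

theorem le_score_iff {k : ℕ} (hk : k ≤ n) :
    k ≤ score n z π x ↔ ∀ j : Fin n, (j : ℕ) < k → z (π j) = x (π j) := by
  refine ⟨fun h j hj => ?_, fun h => Nat.le_findGreatest hk h⟩
  exact Nat.findGreatest_spec (P := fun i => ∀ j : Fin n, (j : ℕ) < i → z (π j) = x (π j))
    (Nat.zero_le n) (fun j hj => absurd hj (Nat.not_lt_zero _)) j (hj.trans_le h)

theorem apply_eq_of_lt_score {j : Fin n} (hj : (j : ℕ) < score n z π x) : z (π j) = x (π j) :=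
  (le_score_iff score_le).1 le_rfl j hj

theorem score_eq_iff {j : Fin n} :
    score n z π x = j ↔ (j : ℕ) ≤ score n z π x ∧ z (π j) ≠ x (π j) := by
  refine ⟨fun h => ⟨h.ge, fun heq => ?_⟩, fun ⟨hle, hne⟩ => ?_⟩
  · have hsucc : (j : ℕ) + 1 ≤ score n z π x := by
      refine (le_score_iff j.isLt).2 fun k hk => ?_
      rcases Nat.lt_succ_iff_lt_or_eq.1 hk with hk | hk
      · exact apply_eq_of_lt_score (hk.trans_eq h.symm)
      · rwa [Fin.ext hk]
    omega
  · exact hle.antisymm' (not_lt.1 fun hlt => hne (apply_eq_of_lt_score hlt))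

theorem score_congr
    (h : ∀ j : Fin n, (j : ℕ) ≤ score n z π x → (z' (π' j) = x (π' j) ↔ z (π j) = x (π j))) :
    score n z' π' x = score n z π x := by
  have hle : score n z π x ≤ score n z' π' x :=
    (le_score_iff score_le).2 fun j hj => (h j hj.le).2 (apply_eq_of_lt_score hj)
  rcases score_le.eq_or_lt with heq | hlt
  · exact hle.antisymm' (score_le.trans_eq heq.symm)
  · let j : Fin n := ⟨score n z π x, hlt⟩
    have hfail : z (π j) ≠ x (π j) := (score_eq_iff.1 (rfl : score n z π x = j)).2
    exact (score_eq_iff (j := j)).2 ⟨hle, mt (h j le_rfl).1 hfail⟩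

end Score

variable {n : ℕ} (g : List ℕ → Fin n → Bool) (b : Fin n → Bool) (i : Fin n) (t : ℕ)
  (σ : Equiv.Perm (Fin n))

/-- The target string that reads `b` in the order imposed by `σ`. The hard distribution draws `σ`
uniformly and takes the secret `(patternTarget b σ, σ)` for a fixed alternating pattern `b`. -/
def patternTarget : Fin n → Bool := fun v => b (σ.symm v)

/-- The scores of the first `t` queries of `g` against `(patternTarget b σ, σ)`. -/
def history : List ℕ := histScores n g (patternTarget b σ) σ t

/-- The query that `g` asks at time `t` (counted from `0`) against `(patternTarget b σ, σ)`. -/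
def query : Fin n → Bool := g (history g b t σ)

/-- The score of the query asked at time `t`. Position `i` is *reached* by this query if
`i ≤ scoreAt g b t σ`, that is, if all earlier positions are guessed correctly. -/
def scoreAt : ℕ := score n (patternTarget b σ) σ (query g b t σ)

/-- Position `i` has not been reached by any of the first `t` queries. -/
def Fresh : Prop := ∀ k < t, scoreAt g b k σ < i

/-- Among the first `t` queries, some query reaches position `i`, and the first one to do so guesses
`i` wrongly. -/
def Hard : Prop := ∃ k < t, scoreAt g b k σ = i ∧ Fresh g b i k σ

/-- The scores of the first `t` queries do not determine the order `σ`. -/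
def Unresolved : Prop := ∃ σ', σ' ≠ σ ∧ history g b t σ' = history g b t σ

instance : Decidable (Fresh g b i t σ) := inferInstanceAs (Decidable (∀ k < t, _))

instance : Decidable (Hard g b i t σ) := inferInstanceAs (Decidable (∃ k < t, _))

instance : Decidable (Unresolved g b t σ) := inferInstanceAs (Decidable (∃ _, _))

/-- The possible values of `σ i` given the earlier entries of `σ`, as far as they are visible from
those of the first `t` queries that reach position `i`. -/
def candidates : Finset (Fin n) :=
  {v | (∀ j < i, σ j ≠ v) ∧ ∀ k < t, i ≤ scoreAt g b k σ → query g b k σ v = query g b k σ (σ i)}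

/-- The order obtained from `σ` by exchanging the entry at position `i` with the entry `u`. -/
def resample (u : Fin n) : Equiv.Perm (Fin n) := Equiv.swap (σ i) u * σ

variable {g b i t σ} {σ' : Equiv.Perm (Fin n)} {k : ℕ} {j u v : Fin n}

theorem patternTarget_apply : patternTarget b σ (σ j) = b j := by
  simp [patternTarget]

theorem le_scoreAt_iff :
    i ≤ scoreAt g b t σ ↔ ∀ j < i, b j = query g b t σ (σ j) := by
  simp only [scoreAt, le_score_iff i.isLt.le, patternTarget_apply, Fin.lt_def]

theorem eq_query_of_lt_scoreAt (h : i < scoreAt g b t σ) : b i = query g b t σ (σ i) :=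
  patternTarget_apply.symm.trans (apply_eq_of_lt_score h)

theorem scoreAt_eq_iff :
    scoreAt g b t σ = i ↔ i ≤ scoreAt g b t σ ∧ b i ≠ query g b t σ (σ i) := by
  simp only [scoreAt, score_eq_iff, patternTarget_apply]

theorem history_succ : history g b (t + 1) σ = history g b t σ ++ [scoreAt g b t σ] := rfl

theorem history_eq_of_le (h : history g b t σ' = history g b t σ) (hk : k ≤ t) :
    history g b k σ' = history g b k σ := by
  induction t, hk using Nat.le_induction with
  | base => exact h
  | succ t _ ih =>
    rw [history_succ, history_succ] at h
    exact ih (List.append_inj_left' h rfl)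

theorem query_eq_of_history_eq (h : history g b t σ' = history g b t σ) (hk : k ≤ t) :
    query g b k σ' = query g b k σ := by
  rw [query, query, history_eq_of_le h hk]

theorem scoreAt_eq_of_history_eq (h : history g b t σ' = history g b t σ) (hk : k < t) :
    scoreAt g b k σ' = scoreAt g b k σ := by
  have := history_eq_of_le h (Nat.succ_le_of_lt hk)
  rw [history_succ, history_succ] at this
  exact List.singleton_inj.1 (List.append_inj_right' this rfl)

theorem history_congr
    (h : ∀ k < t, ∀ j : Fin n, j ≤ scoreAt g b k σ → query g b k σ (σ' j) = query g b k σ (σ j)) :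
    history g b t σ' = history g b t σ := by
  induction t with
  | zero => rfl
  | succ t ih =>
    have hhist := ih fun k hk => h k (hk.trans t.lt_succ_self)
    have hscore : scoreAt g b t σ' = scoreAt g b t σ := by
      rw [scoreAt, query_eq_of_history_eq hhist le_rfl]
      refine score_congr fun j hj => ?_
      rw [patternTarget_apply, patternTarget_apply, h t t.lt_succ_self j hj]
    rw [history_succ, history_succ, hhist, hscore]

theorem fresh_iff_of_history_eq (h : history g b t σ' = history g b t σ) :
    Fresh g b i t σ' ↔ Fresh g b i t σ :=
  forall₂_congr fun k hk => by rw [scoreAt_eq_of_history_eq h hk]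

theorem hard_iff_of_history_eq (h : history g b t σ' = history g b t σ) :
    Hard g b i t σ' ↔ Hard g b i t σ :=
  exists_congr fun k => and_congr_right fun hk => by
    rw [scoreAt_eq_of_history_eq h hk, fresh_iff_of_history_eq (history_eq_of_le h hk.le)]

theorem unresolved_of_history_eq (h : history g b t σ' = history g b t σ)
    (hσ : Unresolved g b t σ) : Unresolved g b t σ' := by
  rcases eq_or_ne σ' σ with rfl | hne
  · exact hσ
  · exact ⟨σ, hne.symm, h.symm⟩

theorem Unresolved.mono (h : Unresolved g b t σ) (hk : k ≤ t) : Unresolved g b k σ :=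
  let ⟨σ', hne, heq⟩ := h
  ⟨σ', hne, history_eq_of_le heq hk⟩

theorem hard_succ_iff :
    Hard g b i (t + 1) σ ↔ Hard g b i t σ ∨ scoreAt g b t σ = i ∧ Fresh g b i t σ := by
  simp only [Hard, Nat.exists_lt_succ_right]

theorem Hard.not_fresh (h : Hard g b i t σ) : ¬ Fresh g b i t σ := fun hfresh =>
  let ⟨k, hk, hscore, _⟩ := h
  (hfresh k hk).ne hscore

theorem exists_fresh_of_not_fresh (h : ¬ Fresh g b i t σ) :
    ∃ k < t, Fresh g b i k σ ∧ i ≤ scoreAt g b k σ := by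
  have hreach : ∃ k, k < t ∧ i ≤ scoreAt g b k σ := by simpa [Fresh] using h
  obtain ⟨hk, hscore⟩ := Nat.find_spec hreach
  refine ⟨Nat.find hreach, hk, fun l hl => ?_, hscore⟩
  exact not_le.1 fun hle => Nat.find_min hreach hl ⟨hl.trans hk, hle⟩

/-! ### Resampling one position -/

theorem mem_candidates : v ∈ candidates g b i t σ ↔ (∀ j < i, σ j ≠ v) ∧
    ∀ k < t, i ≤ scoreAt g b k σ → query g b k σ v = query g b k σ (σ i) := by
  simp [candidates]

theorem apply_mem_candidates : σ i ∈ candidates g b i t σ :=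
  mem_candidates.2 ⟨fun _ hj h => hj.ne (σ.injective h), fun _ _ _ => rfl⟩

theorem card_candidates_le : #(candidates g b i t σ) ≤ n :=
  card_le_univ _ |>.trans_eq (Fintype.card_fin n)

theorem resample_apply_self : resample i σ u i = u := by
  simp [resample]

theorem resample_resample : resample i (resample i σ u) (σ i) = σ := by
  simp [resample, Equiv.swap_comm u, ← mul_assoc]

theorem resample_injective : Function.Injective (resample i σ) := fun u v h => by
  rw [← resample_apply_self (i := i) (σ := σ) (u := u), h, resample_apply_self]

theorem resample_apply_of_lt (hu : u ∈ candidates g b i t σ) (hj : j < i) :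
    resample i σ u j = σ j :=
  Equiv.swap_apply_of_ne_of_ne (σ.injective.ne hj.ne) ((mem_candidates.1 hu).1 j hj)

theorem history_resample (hu : u ∈ candidates g b i t σ) :
    history g b t (resample i σ u) = history g b t σ := by
  refine history_congr fun k hk j hj => ?_
  by_cases hreach : i ≤ scoreAt g b k σ
  · have hquery := (mem_candidates.1 hu).2 k hk hreach
    rw [resample, Equiv.Perm.mul_apply, Equiv.swap_apply_def]
    split_ifs with hi hu
    · rw [hquery, hi]
    · rw [hu, hquery]
    · rfl
  · rw [resample_apply_of_lt hu (by omega)]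

theorem candidates_resample (hu : u ∈ candidates g b i t σ) :
    candidates g b i t (resample i σ u) = candidates g b i t σ := by
  ext v
  rw [mem_candidates, mem_candidates, resample_apply_self]
  refine and_congr (forall₂_congr fun j hj => by rw [resample_apply_of_lt hu hj])
    (forall₂_congr fun k hk => ?_)
  rw [scoreAt_eq_of_history_eq (history_resample hu) hk,
    query_eq_of_history_eq (history_resample hu) hk.le]
  exact forall_congr' fun hreach => by rw [(mem_candidates.1 hu).2 k hk hreach]

theorem le_scoreAt_resample_iff (hu : u ∈ candidates g b i t σ) :
    i ≤ scoreAt g b t (resample i σ u) ↔ i ≤ scoreAt g b t σ := by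
  rw [le_scoreAt_iff, le_scoreAt_iff, query_eq_of_history_eq (history_resample hu) le_rfl]
  exact forall₂_congr fun j hj => by rw [resample_apply_of_lt hu hj]

theorem scoreAt_resample_eq_iff (hu : u ∈ candidates g b i t σ) (hreach : i ≤ scoreAt g b t σ) :
    scoreAt g b t (resample i σ u) = i ↔ query g b t σ u ≠ b i := by
  rw [scoreAt_eq_iff, le_scoreAt_resample_iff hu, resample_apply_self,
    query_eq_of_history_eq (history_resample hu) le_rfl, ne_comm, and_iff_right hreach]

theorem candidates_succ_of_scoreAt_lt (h : scoreAt g b t σ < i) :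
    candidates g b i (t + 1) σ = candidates g b i t σ := by
  ext v
  simp only [mem_candidates, Nat.forall_lt_succ_right, h.not_ge, false_imp_iff, and_true]

theorem candidates_succ_of_le_scoreAt (h : i ≤ scoreAt g b t σ) :
    candidates g b i (t + 1) σ =
      {v ∈ candidates g b i t σ | query g b t σ v = query g b t σ (σ i)} := by
  ext v
  simp only [mem_candidates, mem_filter, Nat.forall_lt_succ_right, h, true_imp_iff, and_assoc]

theorem candidates_succ_resample (hu : u ∈ candidates g b i t σ) (hreach : i ≤ scoreAt g b t σ) :
    candidates g b i (t + 1) (resample i σ u) =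
      {v ∈ candidates g b i t σ | query g b t σ v = query g b t σ u} := by
  rw [candidates_succ_of_le_scoreAt ((le_scoreAt_resample_iff hu).2 hreach),
    candidates_resample hu, query_eq_of_history_eq (history_resample hu) le_rfl,
    resample_apply_self]

theorem candidates_eq_singleton (h : ¬ Unresolved g b t σ) : candidates g b i t σ = {σ i} := by
  refine eq_singleton_iff_unique_mem.2 ⟨apply_mem_candidates, fun u hu => ?_⟩
  by_contra hne
  refine h ⟨resample i σ u, fun heq => hne ?_, history_resample hu⟩
  rw [← resample_apply_self (i := i) (σ := σ) (u := u), heq]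

theorem card_candidates_of_fresh (h : Fresh g b i t σ) : #(candidates g b i t σ) = n - i := by
  have : candidates g b i t σ = (Ici i).map σ.toEmbedding := by
    ext v
    have hvacuous : ∀ k < t, i ≤ scoreAt g b k σ → query g b k σ v = query g b k σ (σ i) :=
      fun k hk hle => absurd hle (h k hk).not_ge
    rw [mem_candidates, and_iff_left hvacuous, mem_map_equiv, mem_Ici, ← not_lt]
    refine ⟨fun hne hlt => hne _ hlt (σ.apply_symm_apply v), fun hlt j hj heq => hlt ?_⟩
    rwa [← heq, σ.symm_apply_apply]
  rw [this, card_map, Fin.card_Ici]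

theorem not_fresh_of_not_unresolved (h : ¬ Unresolved g b t σ) (hi : (i : ℕ) + 1 < n) :
    ¬ Fresh g b i t σ := fun hfresh => by
  have := card_candidates_of_fresh hfresh
  rw [candidates_eq_singleton h, card_singleton] at this
  omega

/-- Given the first `t` scores and the entries before position `i`, the entry at `i` is uniform on
the candidate set, so it suffices to compare averages over it. -/
theorem sum_le_sum_of_sum_resample_le {F G : Equiv.Perm (Fin n) → ℝ}
    (h : ∀ σ, ∑ u ∈ candidates g b i t σ, F (resample i σ u) ≤
      ∑ u ∈ candidates g b i t σ, G (resample i σ u)) :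
    ∑ σ, F σ ≤ ∑ σ, G σ := by
  let B (σ : Equiv.Perm (Fin n)) : Finset (Equiv.Perm (Fin n)) :=
    (candidates g b i t σ).map ⟨resample i σ, resample_injective⟩
  have hmem {σ τ} : τ ∈ B σ ↔ ∃ u ∈ candidates g b i t σ, resample i σ u = τ := mem_map
  have hB (σ) : (B σ).Nonempty := map_nonempty.2 ⟨_, apply_mem_candidates⟩
  have hsymm (σ) : ∀ τ ∈ B σ, σ ∈ B τ := fun τ hτ => by
    obtain ⟨u, hu, rfl⟩ := hmem.1 hτ
    exact hmem.2 ⟨σ i, by rw [candidates_resample hu]; exact apply_mem_candidates,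
      resample_resample⟩
  have hcard (σ) : ∀ τ ∈ B σ, #(B τ) = #(B σ) := fun τ hτ => by
    obtain ⟨u, hu, rfl⟩ := hmem.1 hτ
    simp only [B, card_map, candidates_resample hu]
  rw [sum_eq_sum_inv_card_mul_sum B hB hsymm hcard F,
    sum_eq_sum_inv_card_mul_sum B hB hsymm hcard G]
  gcongr ∑ σ, _ * ?_ with σ
  simpa only [B, sum_map, Function.Embedding.coeFn_mk] using h σ

/-! ### The potential argument -/

variable (g b i t σ)

/-- The potential of position `i`: how far the queries have narrowed its candidate set, measured
by `logLog`, once the position is hard. -/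
noncomputable def potential : ℝ :=
  if Hard g b i t σ then logLog (n / #(candidates g b i t σ)) else 0

/-- A bound on the expected increase of the potential of position `i` at time `t`. While `σ` is not
yet determined, the query pays `2` to the position at which it fails and the relative size of the
candidate set to every hard position; the first query to reach position `i` pays another `2`. -/
noncomputable def charge : ℝ :=
  (if Unresolved g b t σ ∧ scoreAt g b t σ = i then 2 else 0) +
    (if Unresolved g b t σ ∧ Hard g b i t σ then (#(candidates g b i t σ) : ℝ) / n else 0) +
    if Fresh g b i t σ ∧ i ≤ scoreAt g b t σ then 2 else 0

variable {g b i t σ} {N : ℕ}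

theorem charge_nonneg : 0 ≤ charge g b i t σ := by
  unfold charge
  positivity

theorem potential_succ_of_idle (h : i ≤ scoreAt g b t σ →
    ¬ Fresh g b i t σ ∧ (Hard g b i t σ → ¬ Unresolved g b t σ)) :
    potential g b i (t + 1) σ = potential g b i t σ := by
  have hhard : Hard g b i (t + 1) σ ↔ Hard g b i t σ :=
    hard_succ_iff.trans (or_iff_left fun ⟨heq, hfresh⟩ => (h heq.ge).1 hfresh)
  refine ite_congr (propext hhard) (fun hi => ?_) fun _ => rfl
  by_cases hreach : i ≤ scoreAt g b t σ
  · have hres := (h hreach).2 hi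
    rw [candidates_eq_singleton hres,
      candidates_eq_singleton fun hU => hres (hU.mono t.le_succ)]
  · rw [candidates_succ_of_scoreAt_lt (not_le.1 hreach)]

theorem sum_potential_succ_resample_le_of_hard (hi : Hard g b i t σ) (hU : Unresolved g b t σ)
    (hreach : i ≤ scoreAt g b t σ) :
    ∑ u ∈ candidates g b i t σ, potential g b i (t + 1) (resample i σ u) ≤
      ∑ u ∈ candidates g b i t σ,
        (potential g b i t (resample i σ u) + charge g b i t (resample i σ u)) := by
  have hnot := hi.not_fresh
  calc ∑ u ∈ candidates g b i t σ, potential g b i (t + 1) (resample i σ u)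
      = ∑ u ∈ candidates g b i t σ,
          logLog (n / #{v ∈ candidates g b i t σ | query g b t σ v = query g b t σ u}) := by
        refine sum_congr rfl fun u hu => ?_
        simp only [potential, hard_succ_iff, hard_iff_of_history_eq (history_resample hu), hi,
          true_or, if_true, candidates_succ_resample hu hreach]
    _ ≤ ∑ u ∈ candidates g b i t σ, (logLog (n / #(candidates g b i t σ)) +
          ((if query g b t σ u = b i then 0 else 2) + #(candidates g b i t σ) / n)) :=
        sum_logLog_card_fiber_le ⟨_, apply_mem_candidates⟩ card_candidates_le _ _
    _ = ∑ u ∈ candidates g b i t σ,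
          (potential g b i t (resample i σ u) + charge g b i t (resample i σ u)) := by
        refine sum_congr rfl fun u hu => ?_
        have hhist := history_resample hu
        simp only [potential, charge, hard_iff_of_history_eq hhist,
          fresh_iff_of_history_eq hhist, candidates_resample hu,
          scoreAt_resample_eq_iff hu hreach, hi, hnot, unresolved_of_history_eq hhist hU,
          if_true, true_and, false_and, if_false, add_zero, ite_not]

theorem sum_potential_succ_resample_le_of_fresh (hi : Fresh g b i t σ) (hin : 2 * (i : ℕ) ≤ n)
    (hreach : i ≤ scoreAt g b t σ) :
    ∑ u ∈ candidates g b i t σ, potential g b i (t + 1) (resample i σ u) ≤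
      ∑ u ∈ candidates g b i t σ,
        (potential g b i t (resample i σ u) + charge g b i t (resample i σ u)) := by
  have hnot : ¬ Hard g b i t σ := fun h => h.not_fresh hi
  calc ∑ u ∈ candidates g b i t σ, potential g b i (t + 1) (resample i σ u)
      = ∑ u ∈ candidates g b i t σ, (if query g b t σ u = b i then 0 else
          logLog (n / #{v ∈ candidates g b i t σ | query g b t σ v = query g b t σ u})) := by
        refine sum_congr rfl fun u hu => ?_
        have hhist := history_resample hu
        simp only [potential, hard_succ_iff, hard_iff_of_history_eq hhist,
          fresh_iff_of_history_eq hhist, candidates_succ_resample hu hreach,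
          scoreAt_resample_eq_iff hu hreach, hi, hnot, false_or, and_true, ite_not]
    _ ≤ n := sum_ite_logLog_card_fiber_le card_candidates_le _ _
    _ ≤ ∑ _u ∈ candidates g b i t σ, 2 := by
        rw [sum_const, card_candidates_of_fresh hi, nsmul_eq_mul]
        exact_mod_cast (by omega : n ≤ (n - i) * 2)
    _ ≤ _ := by
        refine sum_le_sum fun u hu => ?_
        have hhist := history_resample hu
        have hfirst : Fresh g b i t (resample i σ u) ∧ i ≤ scoreAt g b t (resample i σ u) :=
          ⟨(fresh_iff_of_history_eq hhist).2 hi, (le_scoreAt_resample_iff hu).2 hreach⟩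
        rw [potential, charge, if_neg (mt (hard_iff_of_history_eq hhist).1 hnot), if_pos hfirst,
          zero_add]
        exact le_add_of_nonneg_left (by positivity)

theorem sum_potential_succ_le (hin : 2 * (i : ℕ) ≤ n) :
    ∑ σ, potential g b i (t + 1) σ ≤ ∑ σ, (potential g b i t σ + charge g b i t σ) := by
  refine sum_le_sum_of_sum_resample_le (g := g) (b := b) (i := i) (t := t) fun σ => ?_
  by_cases hidle : i ≤ scoreAt g b t σ →
      ¬ Fresh g b i t σ ∧ (Hard g b i t σ → ¬ Unresolved g b t σ)
  · refine sum_le_sum fun u hu => ?_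
    have hhist := history_resample hu
    rw [potential_succ_of_idle]
    · exact le_add_of_nonneg_right charge_nonneg
    · rw [le_scoreAt_resample_iff hu, fresh_iff_of_history_eq hhist, hard_iff_of_history_eq hhist]
      exact fun hreach => (hidle hreach).imp_right fun h hi hU =>
        h hi (unresolved_of_history_eq hhist.symm hU)
  · push Not at hidle
    obtain ⟨hreach, hactive⟩ := hidle
    by_cases hfresh : Fresh g b i t σ
    · exact sum_potential_succ_resample_le_of_fresh hfresh hin hreach
    · exact sum_potential_succ_resample_le_of_hard (hactive hfresh).1 (hactive hfresh).2 hreach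

theorem sum_potential_le_sum_charge (hin : 2 * (i : ℕ) ≤ n) :
    ∑ σ, potential g b i N σ ≤ ∑ σ, ∑ t ∈ range N, charge g b i t σ := by
  induction N with
  | zero => simp [potential, Hard]
  | succ N ih =>
    calc ∑ σ, potential g b i (N + 1) σ
        ≤ ∑ σ, potential g b i N σ + ∑ σ, charge g b i N σ :=
          (sum_potential_succ_le hin).trans_eq sum_add_distrib
      _ ≤ ∑ σ, ∑ t ∈ range N, charge g b i t σ + ∑ σ, charge g b i N σ := by gcongr
      _ = ∑ σ, ∑ t ∈ range (N + 1), charge g b i t σ := by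
          simp only [sum_range_succ, sum_add_distrib]

theorem disjoint_candidates_of_hard (hij : i < j) (hb : b i = b j) (hj : Hard g b j t σ) :
    Disjoint (candidates g b i t σ) (candidates g b j t σ) := by
  obtain ⟨k, hk, hscore, -⟩ := hj
  refine disjoint_left.2 fun v hi hj => (scoreAt_eq_iff.1 hscore).2 ?_
  rw [← hb, ← (mem_candidates.1 hj).2 k hk hscore.ge,
    (mem_candidates.1 hi).2 k hk (hscore.ge.trans' hij.le)]
  exact eq_query_of_lt_scoreAt (hscore.ge.trans_lt' hij)

theorem sum_card_candidates_le (I : Finset (Fin n)) :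
    ∑ i ∈ I with Hard g b i t σ, #(candidates g b i t σ) ≤ 2 * n := by
  rw [← sum_fiberwise _ b, Fintype.sum_bool, two_mul]
  refine add_le_add ?_ ?_ <;>
  · rw [← card_biUnion]
    · exact card_le_univ _ |>.trans_eq (Fintype.card_fin n)
    intro i hi j hj hne
    simp only [coe_filter, mem_filter, Set.mem_ofPred_eq] at hi hj
    rcases hne.lt_or_gt with hlt | hlt
    · exact disjoint_candidates_of_hard hlt (hi.2.trans hj.2.symm) hj.1.2
    · exact (disjoint_candidates_of_hard hlt (hj.2.trans hi.2.symm) hi.1.2).symm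

theorem card_first_reach_le_one :
    #{t ∈ range N | Fresh g b i t σ ∧ i ≤ scoreAt g b t σ} ≤ 1 := by
  refine card_le_one.2 fun t ht k hk => ?_
  simp only [mem_filter] at ht hk
  rcases lt_trichotomy t k with h | h | h
  · exact absurd ht.2.2 (hk.2.1 t h).not_ge
  · exact h
  · exact absurd hk.2.2 (ht.2.1 k h).not_ge

theorem sum_charge_le (I : Finset (Fin n)) :
    ∑ i ∈ I, charge g b i t σ ≤ (if Unresolved g b t σ then 4 else 0) +
      ∑ i ∈ I, if Fresh g b i t σ ∧ i ≤ scoreAt g b t σ then 2 else 0 := by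
  simp only [charge, sum_add_distrib]
  gcongr
  split_ifs with hU
  · have hfail : #{i ∈ I | scoreAt g b t σ = (i : Fin n)} ≤ 1 :=
      card_le_one.2 fun i hi j hj =>
        Fin.ext ((mem_filter.1 hi).2.symm.trans (mem_filter.1 hj).2)
    have hcand : ((∑ i ∈ I with Hard g b i t σ, #(candidates g b i t σ) : ℕ) : ℝ) ≤ 2 * n := by
      exact_mod_cast sum_card_candidates_le I
    simp only [hU, true_and, ← sum_filter, sum_const, nsmul_eq_mul, ← sum_div, ← Nat.cast_sum]
    calc _ ≤ ((1 : ℕ) : ℝ) * 2 + 2 * n / n := by gcongr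
      _ ≤ 4 := by linarith [mul_div_assoc (2 : ℝ) n n, div_self_le_one (n : ℝ)]
  · simp [hU]

theorem sum_sum_charge_le (I : Finset (Fin n)) :
    ∑ i ∈ I, ∑ t ∈ range N, charge g b i t σ ≤
      4 * #{t ∈ range N | Unresolved g b t σ} + 2 * #I := by
  calc ∑ i ∈ I, ∑ t ∈ range N, charge g b i t σ = ∑ t ∈ range N, ∑ i ∈ I, charge g b i t σ :=
        sum_comm
    _ ≤ ∑ t ∈ range N, ((if Unresolved g b t σ then 4 else 0) +
          ∑ i ∈ I, if Fresh g b i t σ ∧ i ≤ scoreAt g b t σ then 2 else 0) :=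
        sum_le_sum fun t _ => sum_charge_le I
    _ = 4 * #{t ∈ range N | Unresolved g b t σ} +
          ∑ i ∈ I, 2 * (#{t ∈ range N | Fresh g b i t σ ∧ i ≤ scoreAt g b t σ} : ℝ) := by
        rw [sum_add_distrib, sum_comm]
        simp only [← sum_filter, sum_const, nsmul_eq_mul, mul_comm]
    _ ≤ 4 * #{t ∈ range N | Unresolved g b t σ} + ∑ _i ∈ I, 2 * ((1 : ℕ) : ℝ) := by
        gcongr
        exact card_first_reach_le_one
    _ = 4 * #{t ∈ range N | Unresolved g b t σ} + 2 * #I := by simp [mul_comm]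

theorem sum_sum_potential_le {I : Finset (Fin n)} (hI : ∀ i ∈ I, 2 * (i : ℕ) ≤ n) :
    ∑ i ∈ I, ∑ σ, potential g b i N σ ≤
      4 * (∑ σ, #{t ∈ range N | Unresolved g b t σ} : ℕ) +
        2 * #I * Fintype.card (Equiv.Perm (Fin n)) := by
  calc ∑ i ∈ I, ∑ σ, potential g b i N σ
      ≤ ∑ i ∈ I, ∑ σ, ∑ t ∈ range N, charge g b i t σ :=
        sum_le_sum fun i hi => sum_potential_le_sum_charge (hI i hi)
    _ = ∑ σ, ∑ i ∈ I, ∑ t ∈ range N, charge g b i t σ := sum_comm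
    _ ≤ ∑ σ, (4 * (#{t ∈ range N | Unresolved g b t σ} : ℝ) + 2 * #I) :=
        sum_le_sum fun σ _ => sum_sum_charge_le I
    _ = _ := by
        rw [sum_add_distrib, ← mul_sum, Nat.cast_sum, sum_const, card_univ, nsmul_eq_mul,
          mul_comm (2 * _)]

/-! ### Many positions are hard -/

/-- If neither position is hard, the first query to reach `i` guesses both of them correctly; as
their bits differ, exchanging their entries makes it wrong at `i`. -/
theorem hard_mul_swap (hij : (j : ℕ) = i + 1) (hb : b j ≠ b i) (hreach : ¬ Fresh g b i N σ)
    (hi : ¬ Hard g b i N σ) (hj : ¬ Hard g b j N σ) : Hard g b i N (σ * Equiv.swap i j) := by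
  obtain ⟨k, hk, hfresh, hle⟩ := exists_fresh_of_not_fresh hreach
  have hi_lt : i < scoreAt g b k σ := hle.lt_of_ne fun heq => hi ⟨k, hk, heq.symm, hfresh⟩
  have hj_ne : scoreAt g b k σ ≠ j := fun heq =>
    hj ⟨k, hk, heq, fun l hl => (hfresh l hl).trans (by omega)⟩
  have hj_lt : j < scoreAt g b k σ := by omega
  have hagree (l : Fin n) (hl : l < i) : (σ * Equiv.swap i j) l = σ l := by
    rw [Equiv.Perm.mul_apply, Equiv.swap_apply_of_ne_of_ne] <;> omega
  have hhist : history g b k (σ * Equiv.swap i j) = history g b k σ :=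
    history_congr fun l hl p hp => by rw [hagree p (hp.trans_lt (hfresh l hl))]
  refine ⟨k, hk, scoreAt_eq_iff.2 ?_, (fresh_iff_of_history_eq hhist).2 hfresh⟩
  rw [le_scoreAt_iff, query_eq_of_history_eq hhist le_rfl, Equiv.Perm.mul_apply,
    Equiv.swap_apply_left, ← eq_query_of_lt_scoreAt hj_lt]
  exact ⟨fun l hl => by rw [hagree l hl, le_scoreAt_iff.1 hle l hl], hb.symm⟩

theorem card_perm_le_card_hard (hij : (j : ℕ) = i + 1) (hb : b j ≠ b i)
    (hreach : ∀ σ, ¬ Fresh g b i N σ) :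
    Fintype.card (Equiv.Perm (Fin n)) ≤ 2 * #{σ | Hard g b i N σ} + #{σ | Hard g b j N σ} := by
  let H (p : Fin n) : Finset (Equiv.Perm (Fin n)) := {σ | Hard g b p N σ}
  let H' : Finset (Equiv.Perm (Fin n)) := {σ | Hard g b i N (σ * Equiv.swap i j)}
  have hcover : univ ⊆ (H i ∪ H') ∪ H j := fun σ _ => by
    simp only [H, H', mem_union, mem_filter_univ]
    by_contra! h
    exact h.1.2 (hard_mul_swap hij hb (hreach σ) h.1.1 h.2)
  have hswap : #H' = #(H i) :=
    card_equiv (Equiv.mulRight (Equiv.swap i j)) (by simp [H, H'])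
  calc Fintype.card (Equiv.Perm (Fin n)) ≤ #((H i ∪ H') ∪ H j) := card_le_card hcover
    _ ≤ #(H i ∪ H') + #(H j) := card_union_le _ _
    _ ≤ #(H i) + #H' + #(H j) := by gcongr; exact card_union_le _ _
    _ = 2 * #(H i) + #(H j) := by rw [hswap, two_mul]

theorem potential_nonneg : 0 ≤ potential g b i t σ := by
  rw [potential]
  split_ifs
  · have hpos : 0 < #(candidates g b i t σ) := card_pos.2 ⟨_, apply_mem_candidates⟩
    exact logLog_nonneg ((one_le_div (by positivity)).2 (by exact_mod_cast card_candidates_le))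
  · exact le_rfl

theorem sum_potential_eq (h : ∀ σ, ¬ Unresolved g b N σ) :
    ∑ σ, potential g b i N σ = #{σ | Hard g b i N σ} * logLog n := by
  simp only [potential, candidates_eq_singleton (h _), card_singleton, Nat.cast_one, div_one,
    ← sum_filter, sum_const, nsmul_eq_mul]

theorem card_perm_mul_logLog_le (hij : (j : ℕ) = i + 1) (hb : b j ≠ b i)
    (h : ∀ σ, ¬ Unresolved g b N σ) :
    Fintype.card (Equiv.Perm (Fin n)) * logLog n ≤
      2 * ∑ σ, potential g b i N σ + ∑ σ, potential g b j N σ := by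
  have hreach (σ) : ¬ Fresh g b i N σ := not_fresh_of_not_unresolved (h σ) (by omega)
  have hcard : (Fintype.card (Equiv.Perm (Fin n)) : ℝ) ≤
      2 * #{σ | Hard g b i N σ} + #{σ | Hard g b j N σ} := by
    exact_mod_cast card_perm_le_card_hard hij hb hreach
  rw [sum_potential_eq h, sum_potential_eq h, ← mul_assoc, ← add_mul]
  have hn : (1 : ℝ) ≤ n := by exact_mod_cast Fin.pos i
  exact mul_le_mul_of_nonneg_right hcard (logLog_nonneg hn)

theorem mul_logLog_le_sum_potential (hb : ∀ i j : Fin n, (j : ℕ) = i + 1 → b j ≠ b i)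
    (h : ∀ σ, ¬ Unresolved g b N σ) {m : ℕ} (hm : m + 1 ≤ n) :
    m * (Fintype.card (Equiv.Perm (Fin n)) * logLog n) ≤
      3 * ∑ i : Fin (m + 1), ∑ σ, potential g b (i.castLE hm) N σ := by
  let S : Fin (m + 1) → ℝ := fun i => ∑ σ, potential g b (i.castLE hm) N σ
  have hnonneg (i) : 0 ≤ S i := sum_nonneg fun σ _ => potential_nonneg
  calc m * (Fintype.card (Equiv.Perm (Fin n)) * logLog n)
      = ∑ _i : Fin m, Fintype.card (Equiv.Perm (Fin n)) * logLog n := by simp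
    _ ≤ ∑ i : Fin m, (2 * S i.castSucc + S i.succ) :=
        sum_le_sum fun i _ => card_perm_mul_logLog_le rfl (hb _ _ rfl) h
    _ = 2 * ∑ i : Fin m, S i.castSucc + ∑ i : Fin m, S i.succ := by
        rw [sum_add_distrib, mul_sum]
    _ ≤ 2 * ∑ i, S i + ∑ i, S i := by
        gcongr
        · rw [Fin.sum_univ_castSucc S]
          exact le_add_of_nonneg_right (hnonneg _)
        · rw [Fin.sum_univ_succ S]
          exact le_add_of_nonneg_left (hnonneg _)
    _ = 3 * ∑ i, S i := by ring

theorem le_sum_card_unresolved (hn : 2 ≤ n)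
    (hb : ∀ i j : Fin n, (j : ℕ) = i + 1 → b j ≠ b i) (h : ∀ σ, ¬ Unresolved g b N σ) :
    Fintype.card (Equiv.Perm (Fin n)) * ((n / 2 : ℕ) * (logLog n / 12 - 1)) ≤
      (∑ σ, #{t ∈ range N | Unresolved g b t σ} : ℕ) := by
  have hm : n / 2 + 1 ≤ n := by omega
  have hlower := mul_logLog_le_sum_potential hb h hm
  have hupper := sum_sum_potential_le (g := g) (b := b) (N := N)
    (I := univ.map (Fin.castLEEmb hm)) fun i hi => by
      obtain ⟨k, -, rfl⟩ := mem_map.1 hi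
      rw [Fin.castLEEmb_apply, Fin.val_castLE]
      omega
  simp only [sum_map, Fin.castLEEmb_apply, card_map, card_univ, Fintype.card_fin] at hupper
  have hhalf : (1 : ℝ) ≤ (n / 2 : ℕ) := by exact_mod_cast (by omega : 1 ≤ n / 2)
  have hcard := le_mul_of_one_le_right (Nat.cast_nonneg (Fintype.card (Equiv.Perm (Fin n)))) hhalf
  push_cast at hupper ⊢
  linarith

theorem lt_timeToIdentify (h : Unresolved g b t σ) :
    (t : ℕ∞) < timeToIdentify n g (patternTarget b σ) σ := by
  refine (ENat.natCast_lt_natCast.2 t.lt_succ_self).trans_le (le_sInf ?_)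
  rintro _ ⟨m, rfl, hident⟩
  by_contra! hlt
  obtain ⟨σ', hne, heq⟩ := h.mono (Nat.lt_succ_iff.1 (ENat.natCast_lt_natCast.1 hlt))
  refine hne (hident (patternTarget b σ') σ' fun k hk => ?_).2
  have := scoreAt_eq_of_history_eq heq hk
  rwa [scoreAt, query_eq_of_history_eq heq hk.le] at this

theorem card_unresolved_le_timeToIdentify :
    (#{t ∈ range N | Unresolved g b t σ} : ℕ∞) ≤ timeToIdentify n g (patternTarget b σ) σ := by
  cases hT : timeToIdentify n g (patternTarget b σ) σ with
  | top => exact le_top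
  | coe m =>
    have hsub : {t ∈ range N | Unresolved g b t σ} ⊆ range m := fun t ht =>
      mem_range.2 (ENat.natCast_lt_natCast.1 (hT ▸ lt_timeToIdentify (mem_filter.1 ht).2))
    exact_mod_cast (card_le_card hsub).trans_eq (card_range m)

theorem exists_forall_not_unresolved
    (h : ∀ σ, timeToIdentify n g (patternTarget b σ) σ ≠ ⊤) : ∃ N, ∀ σ, ¬ Unresolved g b N σ := by
  choose T hT using fun σ => ENat.ne_top_iff_exists.1 (h σ)
  refine ⟨univ.sup T, fun σ hU => (lt_timeToIdentify hU).not_ge ?_⟩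
  rw [← hT σ]
  exact_mod_cast le_sup (mem_univ σ)

theorem le_sum_timeToIdentify (hn : 2 ≤ n) (g : List ℕ → Fin n → Bool)
    (hb : ∀ i j : Fin n, (j : ℕ) = i + 1 → b j ≠ b i) :
    Fintype.card (Equiv.Perm (Fin n)) *
        ENNReal.ofReal ((n / 2 : ℕ) * (logLog n / 12 - 1)) ≤
      ∑ σ, (timeToIdentify n g (patternTarget b σ) σ : ℝ≥0∞) := by
  by_cases h : ∀ σ, timeToIdentify n g (patternTarget b σ) σ ≠ ⊤
  · obtain ⟨N, hN⟩ := exists_forall_not_unresolved h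
    calc Fintype.card (Equiv.Perm (Fin n)) * ENNReal.ofReal ((n / 2 : ℕ) * (logLog n / 12 - 1))
        = ENNReal.ofReal (Fintype.card (Equiv.Perm (Fin n)) *
            ((n / 2 : ℕ) * (logLog n / 12 - 1))) := by
          rw [← ENNReal.ofReal_natCast, ← ENNReal.ofReal_mul (Nat.cast_nonneg _)]
      _ ≤ (∑ σ, #{t ∈ range N | Unresolved g b t σ} : ℕ) := by
          rw [← ENNReal.ofReal_natCast]
          exact ENNReal.ofReal_le_ofReal (le_sum_card_unresolved hn hb hN)
      _ ≤ ∑ σ, (timeToIdentify n g (patternTarget b σ) σ : ℝ≥0∞) := by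
          rw [Nat.cast_sum]
          gcongr with σ
          exact_mod_cast card_unresolved_le_timeToIdentify
  · push Not at h
    obtain ⟨σ, hσ⟩ := h
    rw [ENNReal.sum_eq_top.2 ⟨σ, mem_univ σ, by rw [hσ, ENat.toENNReal_top]⟩]
    exact le_top

end HiddenPermutation

/-- The randomized query complexity of the HiddenPermutation problem is `Ω(n log log n)`:
for every distribution over deterministic strategies there is a secret on which the
expected identification time is at least `c · n · log₂ log₂ n`. -/
theorem randomized_lower_bound :
    ∃ c : ℝ, 0 < c ∧ ∃ N : ℕ, ∀ n : ℕ, N ≤ n →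
      ∀ D : PMF (List ℕ → Fin n → Bool),
        ∃ (z : Fin n → Bool) (π : Equiv.Perm (Fin n)),
          ENNReal.ofReal (c * n * Real.logb 2 (Real.logb 2 n)) ≤
            ∑' g, D g * (timeToIdentify n g z π : ℝ≥0∞) := by
  obtain ⟨N, hN⟩ := Filter.eventually_atTop.1
    (HiddenPermutation.eventually_mul_logb_logb_le.and (Filter.eventually_ge_atTop 2))
  refine ⟨1 / 288, by norm_num, N, fun n hn D => ?_⟩
  obtain ⟨hbound, hn2⟩ := hN n hn
  let b : Fin n → Bool := fun j => (j : ℕ).bodd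
  have hb (i j : Fin n) (hij : (j : ℕ) = i + 1) : b j ≠ b i := by simp [b, hij]
  obtain ⟨σ, hσ⟩ := HiddenPermutation.yao_principle D
    (fun g σ => (timeToIdentify n g (HiddenPermutation.patternTarget b σ) σ : ℝ≥0∞)) _
    fun g => HiddenPermutation.le_sum_timeToIdentify hn2 g hb
  exact ⟨HiddenPermutation.patternTarget b σ, σ, (ENNReal.ofReal_le_ofReal hbound).trans hσ⟩
end
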